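/- arXiv:1610.02676 — 4 statements merged into one kernel-verified Lean document; each statement's English description precedes it below -/
import Mathlib

section
/- For every h ≥ 3 there exist ε₀, δ₀ > 0 and C > 0 such that the following holds for every graph H on h vertices, every ε ≤ ε₀, and every positive integer S. Suppose that for every graph G₁ of density at least ε and every equipartition P₀ of V(G₁) of order at most ε^{-C}, there exists a graph on V(G₁) obtained from G₁ by adding/removing at most δ₀|E(G₁)| edges that has an ε^C-regular equipartition refining P₀ of order at most S. Then every n-vertex graph G that cannot be made H-free by deleting fewer than εn² edges contains at least n^h / S^C copies of H. -/
/-!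
Let `G` be `ε`-far from `H`-free and let `G₁ ≤ G` be a union of a maximal family of edge-disjoint
copies of `H`. By maximality `G \ G₁` is `H`-free, so `G₁` has at least `ε n²` edges, and at least
a `1 / h²` fraction of the edges of `G₁` must be deleted to make `G₁` itself `H`-free
(`exists_packing`, which takes for `G₁` any subgraph maximal with the latter property). This
robustness is what makes a constant-factor approximation useful: the
hypothesis supplies `G₂`, differing from `G₁` in at most `δ₀ |E(G₁)|` edges, together with an
`ε ^ C`-regular equipartition `Z` of `G₂` into at most `S` parts. Discard from `G₁` the edges not
in `G₂`, those in pairs of parts that are irregular or sparse in `G₂`, and those in pairs where the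
edges of `G₂ \ G₁` make up more than a `1 / (2 h²)` fraction of the edges of `G₂`
(`exists_clean`). Fewer than `|E(G₁)| / h²` edges are lost, so a copy of `H` survives and its
vertices select parts of `Z`.

Between these parts, `G₂` has the expected number of homomorphisms of `H` up to small errors. For a
fixed edge of `H`, replacing its indicator by that of `G₂ \ G₁` changes the count by a factor of at
most about `1 / (2 h²)`, so at least about half of the homomorphisms use only edges of `G₁ ⊓ G₂`,
hence edges of `G` (`count_good`). The counting averages over resamplings of the two ends of an
edge (`sum_resample`), which reduces it to the regularity of a single pair.

Two observations turn this into the bound `n ^ h / S ^ C`. Applied to a complete graph with the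
partition into singletons, the hypothesis forces `S ≥ 1 / ε` (`one_div_le_of_approx`), so powers of
`ε` are absorbed by powers of `S`. If `n` exceeds a fixed power of `S`, the non-injective maps are
negligible (`copyCount_ge`); otherwise the bound is at most `1` and a single copy suffices.
-/

open Finset
open scoped Classical

/-- `eCnt G A B` is the number of ordered pairs `(u,v) ∈ A × B` with `uv` an edge of `G`. -/
noncomputable def eCnt {V : Type*} [Fintype V] (G : SimpleGraph V) (A B : Finset V) : ℕ :=
  ((A ×ˢ B).filter fun p => G.Adj p.1 p.2).card

/-- The edge density `d_G(A,B)` between vertex subsets `A` and `B`. -/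
noncomputable def dens {V : Type*} [Fintype V] (G : SimpleGraph V) (A B : Finset V) : ℝ :=
  eCnt G A B / (A.card * B.card)

/-- The pair `(A,B)` is `ε`-regular. -/
def RegPair {V : Type*} [Fintype V] (G : SimpleGraph V) (ε : ℝ) (A B : Finset V) : Prop :=
  ∀ A' ⊆ A, ∀ B' ⊆ B, ε * A.card ≤ A'.card → ε * B.card ≤ B'.card →
    |dens G A B - dens G A' B'| ≤ ε

/-- The density `d_G = 2|E|/|V|²` of a graph. -/
noncomputable def graphDensity {V : Type*} [Fintype V] (G : SimpleGraph V) : ℝ :=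
  2 * G.edgeSet.ncard / (Fintype.card V : ℝ) ^ 2

/-- The number of ordered pairs of parts of `P` that are not `ε`-regular. -/
noncomputable def irregCount {V : Type*} [Fintype V] [DecidableEq V] (G : SimpleGraph V)
    (ε : ℝ) (P : Finpartition (univ : Finset V)) : ℕ :=
  ((P.parts ×ˢ P.parts).filter fun pq => ¬ RegPair G ε pq.1 pq.2).card

/-- A partition of the vertex set is an `ε`-regular partition if all but at most `ε k²`
of the ordered pairs of its parts are `ε`-regular. -/
def IsRegularPartition {V : Type*} [Fintype V] [DecidableEq V] (G : SimpleGraph V)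
    (ε : ℝ) (P : Finpartition (univ : Finset V)) : Prop :=
  (irregCount G ε P : ℝ) ≤ ε * (P.parts.card : ℝ) ^ 2

/-- The number of copies of `H` in `G`, i.e. of injective maps `V(H) → V(G)` that map
edges of `H` to edges of `G`. -/
noncomputable def copyCount {α β : Type*} (H : SimpleGraph α) (G : SimpleGraph β) : ℕ :=
  Nat.card {f : α → β // Function.Injective f ∧ ∀ ⦃a b : α⦄, H.Adj a b → G.Adj (f a) (f b)}

/-! ### Counting maps with prescribed adjacencies -/

/-- The number of maps `f : α → V` with `f a ∈ A a` for all `a` such that `R p` holds between the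
images of the two ends of `p`, for every pair `p ∈ E`. -/
noncomputable def homCnt {α V : Type*} [Fintype α] (A : α → Finset V)
    (R : α × α → V → V → Prop) (E : Finset (α × α)) : ℕ :=
  ((Fintype.piFinset A).filter fun f => ∀ p ∈ E, R p (f p.1) (f p.2)).card

/-- Resampling one coordinate: `(f, x) ↦ (update f a x, f a)` is an involution. -/
lemma sum_resample {α V : Type*} [Fintype α] (A : α → Finset V) (F : (α → V) → ℝ) (a : α) :
    ((A a).card : ℝ) * ∑ f ∈ Fintype.piFinset A, F f =
      ∑ f ∈ Fintype.piFinset A, ∑ x ∈ A a, F (Function.update f a x) := by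
  have h1 : ((A a).card : ℝ) * ∑ f ∈ Fintype.piFinset A, F f
      = ∑ f ∈ Fintype.piFinset A, ∑ _x ∈ A a, F f := by
    simp [Finset.mul_sum]
  rw [h1, ← Finset.sum_product', ← Finset.sum_product']
  have key : ∀ z ∈ Fintype.piFinset A ×ˢ A a,
      (Function.update z.1 a z.2, z.1 a) ∈ Fintype.piFinset A ×ˢ A a := by
    rintro ⟨f, x⟩ hz
    simp only [Finset.mem_product, Fintype.mem_piFinset] at hz ⊢
    refine ⟨fun b => ?_, hz.1 a⟩
    by_cases hb : b = a
    · subst hb; simpa using hz.2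
    · simpa [hb] using hz.1 b
  refine Finset.sum_nbij' (fun z => (Function.update z.1 a z.2, z.1 a))
    (fun z => (Function.update z.1 a z.2, z.1 a)) key key ?_ ?_ ?_
  · rintro ⟨f, x⟩ _; simp
  · rintro ⟨f, x⟩ _; simp
  · rintro ⟨f, x⟩ _; simp

lemma sum_resample_two {α V : Type*} [Fintype α] (A : α → Finset V) (F : (α → V) → ℝ)
    (a b : α) :
    ((A a).card : ℝ) * (A b).card * ∑ f ∈ Fintype.piFinset A, F f =
      ∑ f ∈ Fintype.piFinset A, ∑ x ∈ A a, ∑ y ∈ A b,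
        F (Function.update (Function.update f a x) b y) := by
  rw [mul_assoc, sum_resample A F b,
    sum_resample A (fun f => ∑ y ∈ A b, F (Function.update f b y)) a]

lemma homCnt_eq_sum {α V : Type*} [Fintype α] (A : α → Finset V)
    (R : α × α → V → V → Prop) (E : Finset (α × α)) :
    (homCnt A R E : ℝ) =
      ∑ f ∈ Fintype.piFinset A, if ∀ p ∈ E, R p (f p.1) (f p.2) then (1 : ℝ) else 0 := by
  simp [homCnt]

/-- Adding one regular pair `p` to the constraints multiplies the count by the density `d`, up to
an error of `τ` times the number of all maps. The pairs in `E` are oriented along `e`, so no pair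
of `E` other than `p` joins the two ends of `p`; with all remaining coordinates frozen, the other
constraints then amount to restricting the two ends to subsets. -/
lemma homCnt_insert {α V : Type*} [Fintype α] (A : α → Finset V) (hA : ∀ a, (A a).Nonempty)
    (R : α × α → V → V → Prop) (e : α → ℕ) (E : Finset (α × α)) (p : α × α) (hp : p ∉ E)
    (hpe : e p.1 < e p.2) (hE : ∀ q ∈ E, e q.1 < e q.2) (d τ : ℝ)
    (hreg : ∀ X ⊆ A p.1, ∀ Y ⊆ A p.2,
      |∑ x ∈ X, ∑ y ∈ Y, ((if R p x y then (1 : ℝ) else 0) - d)|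
        ≤ τ * ((A p.1).card * (A p.2).card)) :
    |(homCnt A R (insert p E) : ℝ) - d * homCnt A R E| ≤ τ * ∏ a, ((A a).card : ℝ) := by
  obtain ⟨a, b⟩ := p
  dsimp only at hpe hreg
  set F : (α → V) → ℝ := fun f => ((if R (a, b) (f a) (f b) then (1 : ℝ) else 0) - d) *
    (if ∀ q ∈ E, R q (f q.1) (f q.2) then (1 : ℝ) else 0) with hF
  have h1 : (homCnt A R (insert (a, b) E) : ℝ) - d * homCnt A R E
      = ∑ f ∈ Fintype.piFinset A, F f := by
    rw [homCnt_eq_sum, homCnt_eq_sum, Finset.mul_sum, ← Finset.sum_sub_distrib]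
    refine Finset.sum_congr rfl fun f _ => ?_
    simp only [hF, Finset.forall_mem_insert]
    rcases Classical.propComplete (R (a, b) (f a) (f b)) with h1 | h1 <;>
      rcases Classical.propComplete (∀ q ∈ E, R q (f q.1) (f q.2)) with h2 | h2 <;>
      simp only [h1, h2, and_self, and_true, and_false, if_true, if_false] <;> ring
  have hab : a ≠ b := by rintro rfl; exact lt_irrefl _ hpe
  have hinner : ∀ f ∈ Fintype.piFinset A, |∑ x ∈ A a, ∑ y ∈ A b,
      F (Function.update (Function.update f a x) b y)| ≤ τ * ((A a).card * (A b).card) := by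
    intro f _
    set X := (A a).filter fun x => ∀ q ∈ E, q.1 ≠ b → q.2 ≠ b →
      R q (Function.update f a x q.1) (Function.update f a x q.2) with hX
    set Y := (A b).filter fun y => ∀ q ∈ E, (q.1 = b ∨ q.2 = b) →
      R q (Function.update f b y q.1) (Function.update f b y q.2) with hY
    have h2 : ∑ x ∈ A a, ∑ y ∈ A b, F (Function.update (Function.update f a x) b y)
        = ∑ x ∈ X, ∑ y ∈ Y, ((if R (a, b) x y then (1 : ℝ) else 0) - d) := by
      rw [hX, Finset.sum_filter]
      refine Finset.sum_congr rfl fun x _ => ?_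
      rw [hY, Finset.sum_filter]
      rw [← Finset.sum_const_zero (s := A b), ← Finset.sum_ite_irrel]
      refine Finset.sum_congr rfl fun y _ => ?_
      have h3 : (∀ q ∈ E, R q (Function.update (Function.update f a x) b y q.1)
          (Function.update (Function.update f a x) b y q.2)) ↔
          ((∀ q ∈ E, q.1 ≠ b → q.2 ≠ b →
            R q (Function.update f a x q.1) (Function.update f a x q.2)) ∧
          (∀ q ∈ E, (q.1 = b ∨ q.2 = b) →
            R q (Function.update f b y q.1) (Function.update f b y q.2))) := by
        have h4 : ∀ q ∈ E, q.1 ≠ b → q.2 ≠ b →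
            (Function.update (Function.update f a x) b y q.1 = Function.update f a x q.1 ∧
             Function.update (Function.update f a x) b y q.2 = Function.update f a x q.2) := by
          intro q _ h5 h6
          simp [h5, h6]
        have h5 : ∀ q ∈ E, (q.1 = b ∨ q.2 = b) →
            (Function.update (Function.update f a x) b y q.1 = Function.update f b y q.1 ∧
             Function.update (Function.update f a x) b y q.2 = Function.update f b y q.2) := by
          rintro ⟨q1, q2⟩ hq h6
          have h7 := hE _ hq
          have h8 : q1 ≠ a ∧ q2 ≠ a := by
            dsimp only at h6 h7
            constructor
            · rintro rfl
              rcases h6 with h6 | h6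
              · exact hab h6
              · subst h6; exact hp hq
            · rintro rfl
              rcases h6 with h6 | h6
              · subst h6; exact absurd h7 (by omega)
              · exact hab h6
          dsimp only
          rw [Function.update_comm hab]
          simp [h8.1, h8.2]
        constructor
        · intro h
          refine ⟨fun q hq i j => ?_, fun q hq i => ?_⟩
          · have := h q hq; rwa [(h4 q hq i j).1, (h4 q hq i j).2] at this
          · have := h q hq; rwa [(h5 q hq i).1, (h5 q hq i).2] at this
        · rintro ⟨i1, i2⟩ q hq
          by_cases hqb : q.1 = b ∨ q.2 = b
          · rw [(h5 q hq hqb).1, (h5 q hq hqb).2]; exact i2 q hq hqb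
          · push Not at hqb
            rw [(h4 q hq hqb.1 hqb.2).1, (h4 q hq hqb.1 hqb.2).2]
            exact i1 q hq hqb.1 hqb.2
      simp only [hF, h3]
      simp only [Function.update_self, Function.update_of_ne hab]
      split_ifs <;> simp_all
    rw [h2]
    exact hreg X (Finset.filter_subset _ _) Y (Finset.filter_subset _ _)
  have h2 := sum_resample_two A F a b
  have ha : (0 : ℝ) < (A a).card := by exact_mod_cast (hA a).card_pos
  have hb : (0 : ℝ) < (A b).card := by exact_mod_cast (hA b).card_pos
  have h3 : ((A a).card : ℝ) * (A b).card * |∑ f ∈ Fintype.piFinset A, F f|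
      ≤ ((A a).card : ℝ) * (A b).card * (τ * ∏ a, ((A a).card : ℝ)) := by
    rw [← abs_of_pos (mul_pos ha hb), ← abs_mul, h2, abs_of_pos (mul_pos ha hb)]
    refine (Finset.abs_sum_le_sum_abs _ _).trans ((Finset.sum_le_sum hinner).trans ?_)
    rw [Finset.sum_const, Fintype.card_piFinset, nsmul_eq_mul]
    push_cast
    exact le_of_eq (by ring)
  rw [h1]
  exact le_of_mul_le_mul_left h3 (mul_pos ha hb)

/-- Counting lemma: starting from the constraints `E₀`, each regular pair of `T` contributes its
density. -/
lemma homCnt_union {α V : Type*} [Fintype α] (A : α → Finset V) (hA : ∀ a, (A a).Nonempty)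
    (R : α × α → V → V → Prop) (e : α → ℕ) (E₀ : Finset (α × α)) (d : α × α → ℝ) (τ : ℝ)
    (hE₀ : ∀ q ∈ E₀, e q.1 < e q.2) (T : Finset (α × α)) (hdisj : Disjoint T E₀)
    (hT : ∀ q ∈ T, e q.1 < e q.2) (hd0 : ∀ q ∈ T, 0 ≤ d q) (hd1 : ∀ q ∈ T, d q ≤ 1)
    (hreg : ∀ p ∈ T, ∀ X ⊆ A p.1, ∀ Y ⊆ A p.2,
      |∑ x ∈ X, ∑ y ∈ Y, ((if R p x y then (1 : ℝ) else 0) - d p)|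
        ≤ τ * ((A p.1).card * (A p.2).card)) :
    |(homCnt A R (T ∪ E₀) : ℝ) - (∏ p ∈ T, d p) * homCnt A R E₀|
      ≤ T.card * τ * ∏ a, ((A a).card : ℝ) := by
  induction T using Finset.induction_on with
  | empty => simp
  | insert p T hpT ih =>
    have ih' := ih (Finset.disjoint_of_subset_left (Finset.subset_insert _ _) hdisj)
      (fun q hq => hT q (Finset.mem_insert_of_mem hq))
      (fun q hq => hd0 q (Finset.mem_insert_of_mem hq))
      (fun q hq => hd1 q (Finset.mem_insert_of_mem hq))
      (fun q hq => hreg q (Finset.mem_insert_of_mem hq))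
    have hpE : p ∉ E₀ := Finset.disjoint_left.1 hdisj (Finset.mem_insert_self _ _)
    have hstep := homCnt_insert A hA R e (T ∪ E₀) p
      (by simp [hpT, hpE]) (hT p (Finset.mem_insert_self _ _))
      (by
        intro q hq
        rcases Finset.mem_union.1 hq with h | h
        · exact hT q (Finset.mem_insert_of_mem h)
        · exact hE₀ q h) (d p) τ (hreg p (Finset.mem_insert_self _ _))
    rw [Finset.insert_union, Finset.prod_insert hpT, Finset.card_insert_of_notMem hpT]
    have h0 := hd0 p (Finset.mem_insert_self _ _)
    have h1 := hd1 p (Finset.mem_insert_self _ _)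
    set P := ∏ a, ((A a).card : ℝ)
    have e1 : (homCnt A R (insert p (T ∪ E₀)) : ℝ) - d p * (∏ p ∈ T, d p) * homCnt A R E₀
        = ((homCnt A R (insert p (T ∪ E₀)) : ℝ) - d p * homCnt A R (T ∪ E₀))
          + d p * ((homCnt A R (T ∪ E₀) : ℝ) - (∏ p ∈ T, d p) * homCnt A R E₀) := by ring
    rw [e1]
    refine (abs_add_le _ _).trans ?_
    rw [abs_mul, abs_of_nonneg h0]
    have h2 : d p * |(homCnt A R (T ∪ E₀) : ℝ) - (∏ p ∈ T, d p) * homCnt A R E₀|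
        ≤ T.card * τ * P :=
      (mul_le_of_le_one_left (abs_nonneg _) h1).trans ih'
    push_cast
    nlinarith

/-! ### Regular pairs and the count of good copies -/

lemma dens_nonneg {V : Type*} [Fintype V] (G : SimpleGraph V) (A B : Finset V) :
    0 ≤ dens G A B := by
  unfold _root_.dens; positivity

lemma eCnt_le {V : Type*} [Fintype V] (G : SimpleGraph V) (A B : Finset V) :
    eCnt G A B ≤ A.card * B.card := by
  unfold eCnt
  exact (Finset.card_filter_le _ _).trans (Finset.card_product _ _).le

lemma dens_le_one {V : Type*} [Fintype V] (G : SimpleGraph V) (A B : Finset V) :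
    dens G A B ≤ 1 := by
  unfold _root_.dens
  refine div_le_one_of_le₀ ?_ (by positivity)
  exact_mod_cast eCnt_le G A B

lemma dens_mul {V : Type*} [Fintype V] (G : SimpleGraph V) (A B : Finset V) :
    dens G A B * (A.card * B.card) = eCnt G A B := by
  unfold _root_.dens
  rcases eq_or_ne ((A.card : ℝ) * B.card) 0 with h | h
  · have h1 := eCnt_le G A B
    have h2 : A.card * B.card = 0 := by exact_mod_cast h
    have h3 : eCnt G A B = 0 := by omega
    simp [h3]
  · exact div_mul_cancel₀ _ h

lemma eCnt_eq_sum {V : Type*} [Fintype V] (G : SimpleGraph V) (A B : Finset V) :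
    (eCnt G A B : ℝ) = ∑ x ∈ A, ∑ y ∈ B, if G.Adj x y then (1 : ℝ) else 0 := by
  unfold eCnt
  rw [← Finset.sum_product', Finset.sum_boole]

/-- In a regular pair the edge counts between arbitrary subsets are controlled: for small subsets
the bound is trivial. -/
lemma RegPair.abs_sum_le {V : Type*} [Fintype V] {G : SimpleGraph V} {η : ℝ} {A B : Finset V}
    (hη : 0 ≤ η) (h : RegPair G η A B) (X : Finset V) (hX : X ⊆ A) (Y : Finset V) (hY : Y ⊆ B) :
    |∑ x ∈ X, ∑ y ∈ Y, ((if G.Adj x y then (1 : ℝ) else 0) - dens G A B)|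
      ≤ η * (A.card * B.card) := by
  have h1 : ∑ x ∈ X, ∑ y ∈ Y, ((if G.Adj x y then (1 : ℝ) else 0) - dens G A B)
      = (dens G X Y - dens G A B) * (X.card * Y.card) := by
    rw [sub_mul, dens_mul, eCnt_eq_sum]
    simp only [Finset.sum_sub_distrib, Finset.sum_const, nsmul_eq_mul]
    ring
  have hXA : (X.card : ℝ) ≤ A.card := by exact_mod_cast Finset.card_le_card hX
  have hYB : (Y.card : ℝ) ≤ B.card := by exact_mod_cast Finset.card_le_card hY
  have hX0 : (0 : ℝ) ≤ X.card := by positivity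
  have hY0 : (0 : ℝ) ≤ Y.card := by positivity
  have hB0 : (0 : ℝ) ≤ B.card := by positivity
  have hA0 : (0 : ℝ) ≤ A.card := by positivity
  rw [h1, abs_mul, abs_of_nonneg (mul_nonneg hX0 hY0)]
  have htriv : |dens G X Y - dens G A B| ≤ 1 := by
    rw [abs_le]
    constructor <;>
      linarith [dens_nonneg G X Y, dens_nonneg G A B, dens_le_one G X Y, dens_le_one G A B]
  by_cases hx : η * A.card ≤ X.card
  · by_cases hy : η * B.card ≤ Y.card
    · have h2 := h X hX Y hY hx hy
      rw [abs_sub_comm] at h2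
      exact mul_le_mul h2 (mul_le_mul hXA hYB hY0 hA0) (by positivity) hη
    · push Not at hy
      calc |dens G X Y - dens G A B| * (X.card * Y.card) ≤ 1 * (X.card * Y.card) := by gcongr
        _ ≤ 1 * (A.card * (η * B.card)) := by gcongr
        _ = _ := by ring
  · push Not at hx
    calc |dens G X Y - dens G A B| * (X.card * Y.card) ≤ 1 * (X.card * Y.card) := by gcongr
      _ ≤ 1 * ((η * A.card) * B.card) := by gcongr
      _ = _ := by ring

lemma homCnt_empty {α V : Type*} [Fintype α] (A : α → Finset V)
    (R : α × α → V → V → Prop) : (homCnt A R ∅ : ℝ) = ∏ a, ((A a).card : ℝ) := by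
  simp [homCnt, Fintype.card_piFinset]

lemma homCnt_singleton {α V : Type*} [Fintype α] [Fintype V] (A : α → Finset V)
    (R : α × α → V → V → Prop) (q : α × α) (hq : q.1 ≠ q.2)
    (B : SimpleGraph V) (hR : R q = B.Adj) :
    ((A q.1).card * (A q.2).card : ℝ) * homCnt A R {q}
      = eCnt B (A q.1) (A q.2) * ∏ a, ((A a).card : ℝ) := by
  rw [homCnt_eq_sum, sum_resample_two]
  simp only [Finset.mem_singleton, forall_eq, Function.update_self, Function.update_of_ne hq, hR]
  rw [← eCnt_eq_sum, Finset.sum_const, Fintype.card_piFinset, nsmul_eq_mul]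
  push_cast
  ring

/-- If the pairs along `E` are regular and dense in `G₂` and only a small proportion of the
edges of `G₂` between them is missing from `G₁`, then about half of the maps counted by the counting
lemma for `G₂` only use edges of `G₁`. A map using a missing edge at `q` is counted by replacing `G₂`
by `G₂ \ G₁` at `q` alone; all the other pairs are still regular. -/
lemma count_good {α V : Type*} [Fintype α] [Fintype V] (G₁ G₂ : SimpleGraph V)
    (A : α → Finset V) (hA : ∀ a, (A a).Nonempty) (e : α → ℕ) (E : Finset (α × α))
    (hE : ∀ q ∈ E, e q.1 < e q.2) (η γ ρ : ℝ) (hη : 0 ≤ η) (hρ : 0 ≤ ρ)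
    (hreg : ∀ p ∈ E, RegPair G₂ η (A p.1) (A p.2))
    (hbad : ∀ p ∈ E, (eCnt (G₂ \ G₁) (A p.1) (A p.2) : ℝ) ≤ γ * eCnt G₂ (A p.1) (A p.2))
    (hdens : ∀ p ∈ E, ρ ≤ dens G₂ (A p.1) (A p.2)) (hγ : E.card * γ ≤ 1 / 2) :
    (ρ ^ E.card / 2 - E.card * (E.card + 1) * η) * ∏ a, ((A a).card : ℝ)
      ≤ homCnt A (fun _ => (G₁ ⊓ G₂).Adj) E := by
  set P := ∏ a, ((A a).card : ℝ) with hP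
  have hP0 : 0 ≤ P := Finset.prod_nonneg fun _ _ => by positivity
  set d : α × α → ℝ := fun p => dens G₂ (A p.1) (A p.2) with hd
  set D := ∏ p ∈ E, d p with hD
  have hDρ : ρ ^ E.card ≤ D := by
    rw [hD, ← Finset.prod_const]
    exact Finset.prod_le_prod (fun _ _ => hρ) hdens
  have hD0 : 0 ≤ D := (pow_nonneg hρ _).trans hDρ
  -- the counting lemma in `G₂`
  have hall : D * P - E.card * η * P ≤ homCnt A (fun _ => G₂.Adj) E := by
    have h := homCnt_union A hA (fun _ => G₂.Adj) e ∅ d η (by simp) E (by simp) hE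
      (fun q _ => dens_nonneg _ _ _) (fun q _ => dens_le_one _ _ _)
      (fun p hp => (hreg p hp).abs_sum_le hη)
    rw [Finset.union_empty, homCnt_empty] at h
    linarith [(abs_le.1 h).1]
  set R : α × α → α × α → V → V → Prop := fun q p => if p = q then (G₂ \ G₁).Adj else G₂.Adj
    with hR
  have hone : ∀ q ∈ E, (homCnt A (R q) E : ℝ) ≤ γ * D * P + E.card * η * P := by
    intro q hq
    have h := homCnt_union A hA (R q) e {q} d η (by simpa using hE q hq) (E.erase q)
      (by simp) (fun p hp => hE p (Finset.mem_of_mem_erase hp))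
      (fun q _ => dens_nonneg _ _ _) (fun q _ => dens_le_one _ _ _)
      (fun p hp => by
        have hpq := Finset.ne_of_mem_erase hp
        have := (hreg p (Finset.mem_of_mem_erase hp)).abs_sum_le hη
        simpa [hR, hpq] using this)
    have hEq : E.erase q ∪ {q} = E := by
      ext x; by_cases hx : x = q <;> simp [hx, hq]
    rw [hEq] at h
    have hqne : q.1 ≠ q.2 := fun h' => by
      have := hE q hq; rw [h'] at this; exact lt_irrefl _ this
    have hs := homCnt_singleton A (R q) q hqne (G₂ \ G₁) (by simp [hR])
    have ha : (0 : ℝ) < (A q.1).card := by exact_mod_cast (hA q.1).card_pos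
    have hb : (0 : ℝ) < (A q.2).card := by exact_mod_cast (hA q.2).card_pos
    have hs' : (homCnt A (R q) {q} : ℝ) ≤ γ * d q * P := by
      refine le_of_mul_le_mul_left ?_ (mul_pos ha hb)
      rw [hs]
      calc (eCnt (G₂ \ G₁) (A q.1) (A q.2) : ℝ) * P
          ≤ γ * eCnt G₂ (A q.1) (A q.2) * P := mul_le_mul_of_nonneg_right (hbad q hq) hP0
        _ = _ := by rw [← dens_mul]; ring
    have hDq : (∏ p ∈ E.erase q, d p) * d q = D := Finset.prod_erase_mul _ _ hq
    have hpr : 0 ≤ ∏ p ∈ E.erase q, d p := Finset.prod_nonneg fun _ _ => dens_nonneg _ _ _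
    have hcard : ((E.erase q).card : ℝ) ≤ E.card := by
      exact_mod_cast Finset.card_le_card (Finset.erase_subset _ _)
    calc (homCnt A (R q) E : ℝ)
        ≤ (∏ p ∈ E.erase q, d p) * homCnt A (R q) {q} + (E.erase q).card * η * P := by
          linarith [(abs_le.1 h).2]
      _ ≤ (∏ p ∈ E.erase q, d p) * (γ * d q * P) + E.card * η * P :=
          add_le_add (mul_le_mul_of_nonneg_left hs' hpr)
            (mul_le_mul_of_nonneg_right (mul_le_mul_of_nonneg_right hcard hη) hP0)
      _ = γ * D * P + E.card * η * P := by rw [← hDq]; ring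
  have hsub' : (homCnt A (fun _ => G₂.Adj) E : ℝ)
      ≤ homCnt A (fun _ => (G₁ ⊓ G₂).Adj) E + ∑ q ∈ E, (homCnt A (R q) E : ℝ) := by
    simp only [homCnt_eq_sum]
    rw [Finset.sum_comm, ← Finset.sum_add_distrib]
    refine Finset.sum_le_sum fun f _ => ?_
    have hnn : ∀ q ∈ E,
        (0 : ℝ) ≤ if ∀ p ∈ E, R q p (f p.1) (f p.2) then (1 : ℝ) else 0 := by
      intro q _; split_ifs <;> norm_num
    by_cases hf : ∀ p ∈ E, G₂.Adj (f p.1) (f p.2)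
    · rw [if_pos hf]
      by_cases hg : ∀ p ∈ E, G₁.Adj (f p.1) (f p.2)
      · rw [if_pos fun p hp => ⟨hg p hp, hf p hp⟩]
        exact le_add_of_nonneg_right (Finset.sum_nonneg hnn)
      · push Not at hg
        obtain ⟨q, hq, hqn⟩ := hg
        refine le_add_of_nonneg_of_le (by split_ifs <;> norm_num) ?_
        refine le_trans ?_ (Finset.single_le_sum hnn hq)
        rw [if_pos]
        intro p hp
        by_cases hpq : p = q
        · subst hpq
          simpa [hR, SimpleGraph.sdiff_adj] using ⟨hf p hp, hqn⟩
        · simpa [hR, hpq] using hf p hp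
    · rw [if_neg hf]
      exact add_nonneg (by split_ifs <;> norm_num) (Finset.sum_nonneg hnn)
  have hsum : ∑ q ∈ E, (homCnt A (R q) E : ℝ) ≤ E.card * (γ * D * P + E.card * η * P) := by
    refine (Finset.sum_le_sum hone).trans ?_
    rw [Finset.sum_const, nsmul_eq_mul]
  have hDP : 0 ≤ D * P := mul_nonneg hD0 hP0
  have h1 : E.card * γ * (D * P) ≤ 1 / 2 * (D * P) := mul_le_mul_of_nonneg_right hγ hDP
  have h2 : ρ ^ E.card * P ≤ D * P := mul_le_mul_of_nonneg_right hDρ hP0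
  nlinarith

lemma card_not_injective {α V : Type*} [Fintype α] (A : α → Finset V) (s : ℝ)
    (hs : ∀ a, s ≤ (A a).card) :
    s * ((Fintype.piFinset A).filter fun f => ¬ Function.Injective f).card
      ≤ (Fintype.card α : ℝ) ^ 2 * ∏ a, ((A a).card : ℝ) := by
  set P := ∏ a, ((A a).card : ℝ) with hP
  set N : α × α → Finset (α → V) := fun q => (Fintype.piFinset A).filter fun f => f q.1 = f q.2
  set T : Finset (α × α) := univ.filter fun q => q.1 ≠ q.2 with hT
  have hone : ∀ q ∈ T, s * ((N q).card : ℝ) ≤ P := by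
    rintro ⟨a, b⟩ hq
    have hab : b ≠ a := by simpa [hT, eq_comm] using hq
    have h1 : ((N (a, b)).card : ℝ)
        = ∑ f ∈ Fintype.piFinset A, if f a = f b then (1 : ℝ) else 0 := by simp [N]
    refine (mul_le_mul_of_nonneg_right (hs a) (by positivity)).trans ?_
    rw [h1, sum_resample A _ a]
    simp only [Function.update_self, Function.update_of_ne hab]
    calc ∑ f ∈ Fintype.piFinset A, ∑ x ∈ A a, (if x = f b then (1 : ℝ) else 0)
        ≤ ∑ f ∈ Fintype.piFinset A, (1 : ℝ) := by
          refine Finset.sum_le_sum fun f _ => ?_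
          rw [Finset.sum_ite_eq']
          split_ifs <;> norm_num
      _ = P := by simp [hP, Fintype.card_piFinset]
  have hP0 : 0 ≤ P := Finset.prod_nonneg fun _ _ => by positivity
  rcases le_total s 0 with hs0 | hs0
  · exact (mul_nonpos_of_nonpos_of_nonneg hs0 (Nat.cast_nonneg _)).trans
      (mul_nonneg (sq_nonneg _) hP0)
  have hc : (((Fintype.piFinset A).filter fun f => ¬ Function.Injective f).card : ℝ)
      ≤ ∑ q ∈ T, ((N q).card : ℝ) := by
    simp only [N, ← Finset.sum_boole]
    rw [Finset.sum_comm]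
    refine Finset.sum_le_sum fun f _ => ?_
    have hnn : ∀ q ∈ T, (0 : ℝ) ≤ if f q.1 = f q.2 then (1 : ℝ) else 0 := by
      intro q _; split_ifs <;> norm_num
    by_cases hf : Function.Injective f
    · rw [if_neg (not_not.2 hf)]
      exact Finset.sum_nonneg hnn
    · rw [if_pos hf]
      simp only [Function.Injective, not_forall] at hf
      obtain ⟨a, b, h1, h2⟩ := hf
      refine le_trans ?_ (Finset.single_le_sum hnn (a := (a, b)) (by simpa [hT] using h2))
      rw [if_pos h1]
  have hTc : (T.card : ℝ) ≤ (Fintype.card α : ℝ) ^ 2 := by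
    have : T.card ≤ Fintype.card α ^ 2 := by
      refine (Finset.card_filter_le _ _).trans ?_
      simp [sq]
    exact_mod_cast this
  calc _ ≤ s * ∑ q ∈ T, ((N q).card : ℝ) := mul_le_mul_of_nonneg_left hc hs0
    _ = ∑ q ∈ T, s * ((N q).card : ℝ) := Finset.mul_sum _ _ _
    _ ≤ ∑ q ∈ T, P := Finset.sum_le_sum hone
    _ = T.card * P := by simp
    _ ≤ _ := mul_le_mul_of_nonneg_right hTc hP0

/-! ### Extracting a subgraph that is robustly far from `H`-free -/

lemma copyCount_eq_zero_iff {α V : Type*} [Fintype α] [Fintype V] (H : SimpleGraph α)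
    (G : SimpleGraph V) : copyCount H G = 0 ↔
      ∀ f : α → V, Function.Injective f → ¬ ∀ ⦃a b : α⦄, H.Adj a b → G.Adj (f a) (f b) := by
  unfold copyCount
  rw [Nat.card_eq_zero, isEmpty_subtype]
  constructor
  · rintro (h | h)
    · exact fun f hf hg => h f ⟨hf, hg⟩
    · exact absurd h (not_infinite_iff_finite.2 inferInstance)
  · exact fun h => Or.inl fun f hf => h f hf.1 hf.2

lemma ncard_edgeSet_le {α : Type*} [Fintype α] (H : SimpleGraph α) :
    H.edgeSet.ncard ≤ Fintype.card α ^ 2 := by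
  rw [← SimpleGraph.coe_edgeFinset, Set.ncard_coe_finset]
  exact H.card_edgeFinset_le_card_choose_two.trans (Nat.choose_le_pow _ _)

/-- A stand-in `G₁` for a maximal edge-disjoint union of copies of `H` in `G`: what remains of `G` is `H`-free,
while making `G₁` itself `H`-free costs a constant proportion of its edges. The second property is
preserved when a copy of `H` edge-disjoint from `G₁` is added, so a subgraph that is maximal with
this property will do. -/
lemma exists_packing {α V : Type*} [Fintype α] [Fintype V] (H : SimpleGraph α)
    (hH : ∃ a b, H.Adj a b) (G : SimpleGraph V) :
    ∃ G₁ ≤ G, copyCount H (G \ G₁) = 0 ∧ ∀ G' ≤ G₁, copyCount H G' = 0 →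
      G₁.edgeSet.ncard ≤ Fintype.card α ^ 2 * (G₁.edgeSet \ G'.edgeSet).ncard := by
  set s : Set (SimpleGraph V) := {G₁ | G₁ ≤ G ∧ ∀ G' ≤ G₁, copyCount H G' = 0 →
      G₁.edgeSet.ncard ≤ Fintype.card α ^ 2 * (G₁.edgeSet \ G'.edgeSet).ncard} with hs
  obtain ⟨G₁, hmax⟩ := (Set.toFinite s).exists_maximal ⟨⊥, by simp [hs]⟩
  refine ⟨G₁, hmax.prop.1, ?_, hmax.prop.2⟩
  rw [copyCount_eq_zero_iff]
  intro f hf hcopy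
  set K : SimpleGraph V := H.map (⟨f, hf⟩ : α ↪ V) with hK
  have hKG : K ≤ G \ G₁ := by
    intro x y hxy
    rw [hK, SimpleGraph.map_adj] at hxy
    obtain ⟨a, b, hab, rfl, rfl⟩ := hxy
    exact hcopy hab
  have hmem : G₁ ⊔ K ∈ s := by
    refine ⟨sup_le hmax.prop.1 (hKG.trans sdiff_le), fun G' hG' hfree => ?_⟩
    have h1 := hmax.prop.2 (G' ⊓ G₁) inf_le_right (by
      rw [copyCount_eq_zero_iff] at hfree ⊢
      exact fun g hg hc => hfree g hg fun a b hab => (hc hab).1)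
    -- `G'` misses an edge of the added copy
    have h2 : ∃ a b, H.Adj a b ∧ ¬ G'.Adj (f a) (f b) := by
      rw [copyCount_eq_zero_iff] at hfree
      have := hfree f hf
      push Not at this
      exact this
    obtain ⟨a, b, hab, hnot⟩ := h2
    have h3 : insert s(f a, f b) (G₁.edgeSet \ (G' ⊓ G₁).edgeSet)
        ⊆ (G₁ ⊔ K).edgeSet \ G'.edgeSet := by
      intro x hx
      rcases Set.mem_insert_iff.1 hx with rfl | hx
      · refine ⟨?_, by simpa using hnot⟩
        rw [SimpleGraph.mem_edgeSet]
        right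
        rw [hK, SimpleGraph.map_adj]
        exact ⟨a, b, hab, rfl, rfl⟩
      · rw [SimpleGraph.edgeSet_inf] at hx
        refine ⟨?_, fun h => hx.2 ⟨h, hx.1⟩⟩
        rw [SimpleGraph.edgeSet_sup]
        exact Or.inl hx.1
    have h4 : s(f a, f b) ∉ G₁.edgeSet \ (G' ⊓ G₁).edgeSet := by
      intro h
      exact (hcopy hab).2 h.1
    have h5 := Set.ncard_le_ncard h3 (Set.toFinite _)
    rw [Set.ncard_insert_of_notMem h4 (Set.toFinite _)] at h5
    have h6 : K.edgeSet.ncard ≤ Fintype.card α ^ 2 := by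
      have : K.edgeSet ⊆ (Sym2.map f) '' H.edgeSet := by
        intro x hx
        induction x using Sym2.ind with
        | _ x y =>
          rw [SimpleGraph.mem_edgeSet, hK, SimpleGraph.map_adj] at hx
          obtain ⟨a, b, hab, rfl, rfl⟩ := hx
          exact ⟨s(a, b), hab, rfl⟩
      exact (Set.ncard_le_ncard this (Set.toFinite _)).trans
        ((Set.ncard_image_le (Set.toFinite _)).trans (ncard_edgeSet_le H))
    calc (G₁ ⊔ K).edgeSet.ncard ≤ G₁.edgeSet.ncard + K.edgeSet.ncard := by
          rw [SimpleGraph.edgeSet_sup]; exact Set.ncard_union_le _ _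
      _ ≤ Fintype.card α ^ 2 * ((G₁.edgeSet \ (G' ⊓ G₁).edgeSet).ncard + 1) := by
          rw [mul_add, mul_one]; exact Nat.add_le_add h1 h6
      _ ≤ _ := Nat.mul_le_mul_left _ h5
  have hle := hmax.le_of_ge hmem le_sup_left
  obtain ⟨a, b, hab⟩ := hH
  refine (hcopy hab).2 (hle (Or.inr ?_))
  rw [hK, SimpleGraph.map_adj]
  exact ⟨a, b, hab, rfl, rfl⟩

/-! ### Cleaning with respect to a regular partition -/

lemma sum_parts {V : Type*} [Fintype V] [DecidableEq V] (Z : Finpartition (univ : Finset V))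
    (g : V → ℝ) : ∑ A ∈ Z.parts, ∑ x ∈ A, g x = ∑ x, g x := by
  have h := Finset.sum_biUnion (f := g) Z.disjoint
  rw [Z.biUnion_parts] at h
  exact h.symm

lemma sum_parts_two {V : Type*} [Fintype V] [DecidableEq V] (Z : Finpartition (univ : Finset V))
    (g : V → V → ℝ) :
    ∑ A ∈ Z.parts, ∑ B ∈ Z.parts, ∑ x ∈ A, ∑ y ∈ B, g x y = ∑ x, ∑ y, g x y := by
  rw [← sum_parts Z]
  refine Finset.sum_congr rfl fun A _ => ?_
  rw [Finset.sum_comm]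
  exact Finset.sum_congr rfl fun x _ => sum_parts Z (g x)

lemma eCnt_univ {V : Type*} [Fintype V] (G : SimpleGraph V) :
    (eCnt G univ univ : ℝ) = 2 * G.edgeSet.ncard := by
  have h1 := G.sum_degrees_eq_twice_card_edges
  rw [← SimpleGraph.coe_edgeFinset, Set.ncard_coe_finset, eCnt_eq_sum]
  have h2 : ∀ x, ∑ y, (if G.Adj x y then (1 : ℝ) else 0) = G.degree x := by
    intro x
    rw [Finset.sum_boole, ← SimpleGraph.card_neighborFinset_eq_degree,
      SimpleGraph.neighborFinset_eq_filter]
  simp only [h2]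
  exact_mod_cast h1

/-- The pairs of parts kept by the cleaning: regular and dense in `G₂`, with only a small
proportion of their `G₂`-edges missing from `G₁`. -/
def GoodPair {V : Type*} [Fintype V] (G₁ G₂ : SimpleGraph V) (η γ ρ : ℝ) (A B : Finset V) :
    Prop :=
  RegPair G₂ η A B ∧ ρ ≤ _root_.dens G₂ A B ∧
    (eCnt (G₂ \ G₁) A B : ℝ) ≤ γ * eCnt G₂ A B

/-- The edges of `G₂` between pairs of parts that are not good are few: irregular pairs, sparse
pairs and pairs with many edges outside `G₁` are bounded separately. -/
lemma sum_bad_le {V : Type*} [Fintype V] [DecidableEq V] (G₁ G₂ : SimpleGraph V)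
    (Z : Finpartition (univ : Finset V)) (hZ : Z.IsEquipartition) (η γ ρ : ℝ)
    (hγ : 0 < γ) (hρ : 0 ≤ ρ) (hreg : IsRegularPartition G₂ η Z) :
    (∑ u, ∑ v, if G₂.Adj u v ∧ ¬ GoodPair G₁ G₂ η γ ρ (Z.part u) (Z.part v) then (1 : ℝ) else 0)
      ≤ (4 * η + ρ) * (Fintype.card V : ℝ) ^ 2 + 2 * (G₂ \ G₁).edgeSet.ncard / γ := by
  set n := Fintype.card V with hn
  set k := Z.parts.card with hk
  have hkn : k ≤ n := by simpa [hn] using Z.card_parts_le_card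
  have hsize : ∀ A ∈ Z.parts, (A.card : ℝ) * k ≤ 2 * n := by
    intro A hA
    have h1 := hZ.card_part_le_average_add_one hA
    rw [Finset.card_univ] at h1
    have h2 : A.card * k ≤ (n / k + 1) * k := Nat.mul_le_mul_right _ h1
    have h3 : n / k * k ≤ n := Nat.div_mul_le_self _ _
    have h4 : A.card * k ≤ 2 * n := by nlinarith
    exact_mod_cast h4
  rw [← sum_parts_two Z]
  have hpt : ∀ A ∈ Z.parts, ∀ B ∈ Z.parts,
      (∑ u ∈ A, ∑ v ∈ B,
        if G₂.Adj u v ∧ ¬ GoodPair G₁ G₂ η γ ρ (Z.part u) (Z.part v) then (1 : ℝ) else 0)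
      ≤ (if ¬ RegPair G₂ η A B then (A.card * B.card : ℝ) else 0) + ρ * (A.card * B.card)
        + eCnt (G₂ \ G₁) A B / γ := by
    intro A hA B hB
    have h1 : (∑ u ∈ A, ∑ v ∈ B,
        if G₂.Adj u v ∧ ¬ GoodPair G₁ G₂ η γ ρ (Z.part u) (Z.part v) then (1 : ℝ) else 0)
        = if GoodPair G₁ G₂ η γ ρ A B then 0 else (eCnt G₂ A B : ℝ) := by
      have h2 : ∀ u ∈ A, ∀ v ∈ B,
          (if G₂.Adj u v ∧ ¬ GoodPair G₁ G₂ η γ ρ (Z.part u) (Z.part v) then (1 : ℝ) else 0)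
          = if GoodPair G₁ G₂ η γ ρ A B then 0 else (if G₂.Adj u v then (1 : ℝ) else 0) := by
        intro u hu v hv
        rw [Z.part_eq_of_mem hA hu, Z.part_eq_of_mem hB hv]
        by_cases h3 : GoodPair G₁ G₂ η γ ρ A B <;> simp [h3]
      rw [Finset.sum_congr rfl fun u hu => Finset.sum_congr rfl fun v hv => h2 u hu v hv]
      split_ifs with h3
      · simp
      · rw [eCnt_eq_sum]
    rw [h1]
    have hAB : (0 : ℝ) ≤ A.card * B.card := by positivity
    have h5 : (0 : ℝ) ≤ eCnt (G₂ \ G₁) A B / γ := by positivity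
    have h6 : (0 : ℝ) ≤ ρ * (A.card * B.card) := by positivity
    have h7 : (eCnt G₂ A B : ℝ) ≤ A.card * B.card := by exact_mod_cast eCnt_le G₂ A B
    by_cases hr : RegPair G₂ η A B
    · rw [if_neg (not_not.2 hr)]
      split_ifs with h3
      · linarith
      · by_cases hd : ρ ≤ _root_.dens G₂ A B
        · have h8 : γ * eCnt G₂ A B < eCnt (G₂ \ G₁) A B := by
            by_contra h9
            exact h3 ⟨hr, hd, not_lt.1 h9⟩
          have h9 : (eCnt G₂ A B : ℝ) ≤ eCnt (G₂ \ G₁) A B / γ := by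
            rw [le_div_iff₀ hγ]; linarith
          linarith
        · have h8 : (eCnt G₂ A B : ℝ) ≤ ρ * (A.card * B.card) := by
            rw [← dens_mul]
            exact mul_le_mul_of_nonneg_right (not_le.1 hd).le hAB
          linarith
    · rw [if_pos hr]
      split_ifs <;> linarith
  refine (Finset.sum_le_sum fun A hA => Finset.sum_le_sum fun B hB => hpt A hA B hB).trans ?_
  simp only [Finset.sum_add_distrib]
  have e1 : ∑ A ∈ Z.parts, ∑ B ∈ Z.parts, ρ * ((A.card : ℝ) * B.card) = ρ * (n : ℝ) ^ 2 := by
    have := sum_parts_two Z (fun _ _ => ρ)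
    simp only [Finset.sum_const, nsmul_eq_mul, Finset.card_univ] at this
    rw [← hn] at this
    rw [sq, ← mul_assoc, mul_comm ρ, mul_assoc, mul_comm ρ, ← this]
    exact Finset.sum_congr rfl fun A _ => Finset.sum_congr rfl fun B _ => by ring
  have e2 : ∑ A ∈ Z.parts, ∑ B ∈ Z.parts, (eCnt (G₂ \ G₁) A B : ℝ) / γ
      = 2 * (G₂ \ G₁).edgeSet.ncard / γ := by
    rw [← eCnt_univ, eCnt_eq_sum, ← sum_parts_two Z, Finset.sum_div]
    refine Finset.sum_congr rfl fun A _ => ?_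
    rw [Finset.sum_div]
    exact Finset.sum_congr rfl fun B _ => by rw [eCnt_eq_sum]
  have e3 : ∑ A ∈ Z.parts, ∑ B ∈ Z.parts,
      (if ¬ RegPair G₂ η A B then (A.card * B.card : ℝ) else 0) ≤ 4 * η * (n : ℝ) ^ 2 := by
    rcases Nat.eq_zero_or_pos k with hk0 | hk0
    · rw [Finset.card_eq_zero.1 (hk.symm.trans hk0)]
      have : n = 0 := by
        have h1 := Z.sum_card_parts
        rw [Finset.card_eq_zero.1 (hk.symm.trans hk0), Finset.card_univ] at h1
        simpa using h1.symm
      simp [this]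
    have hk0' : (0 : ℝ) < (k : ℝ) ^ 2 := by positivity
    refine le_of_mul_le_mul_right ?_ hk0'
    rw [← Finset.sum_product' (f := fun A B : Finset V =>
      if ¬ RegPair G₂ η A B then (A.card * B.card : ℝ) else 0), ← Finset.sum_filter,
      Finset.sum_mul]
    calc ∑ x ∈ (Z.parts ×ˢ Z.parts).filter (fun x => ¬ RegPair G₂ η x.1 x.2),
          (x.1.card * x.2.card : ℝ) * (k : ℝ) ^ 2
        ≤ ∑ x ∈ (Z.parts ×ˢ Z.parts).filter (fun x => ¬ RegPair G₂ η x.1 x.2),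
          (4 * (n : ℝ) ^ 2) := by
          refine Finset.sum_le_sum fun x hx => ?_
          have hx' := Finset.mem_product.1 (Finset.mem_filter.1 hx).1
          have := mul_le_mul (hsize _ hx'.1) (hsize _ hx'.2) (by positivity) (by positivity)
          nlinarith
      _ = irregCount G₂ η Z * (4 * (n : ℝ) ^ 2) := by
          rw [Finset.sum_const, nsmul_eq_mul]; rfl
      _ ≤ (η * (k : ℝ) ^ 2) * (4 * (n : ℝ) ^ 2) :=
          mul_le_mul_of_nonneg_right hreg (by positivity)
      _ = 4 * η * (n : ℝ) ^ 2 * (k : ℝ) ^ 2 := by ring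
  rw [e1, e2]
  linarith

lemma exists_clean {V : Type*} [Fintype V] [DecidableEq V] (G₁ G₂ : SimpleGraph V)
    (Z : Finpartition (univ : Finset V)) (hZ : Z.IsEquipartition) (η γ ρ : ℝ)
    (hγ : 0 < γ) (hρ : 0 ≤ ρ) (hreg : IsRegularPartition G₂ η Z) :
    ∃ G' ≤ G₁, ((G₁.edgeSet \ G'.edgeSet).ncard : ℝ)
        ≤ (symmDiff G₁.edgeSet G₂.edgeSet).ncard * (1 + 2 / γ)
          + (4 * η + ρ) * (Fintype.card V : ℝ) ^ 2 ∧
      ∀ u v, G'.Adj u v → GoodPair G₁ G₂ η γ ρ (Z.part u) (Z.part v) := by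
  let G' : SimpleGraph V :=
    { Adj := fun u v => (G₁.Adj u v ∧ G₂.Adj u v) ∧
        GoodPair G₁ G₂ η γ ρ (Z.part u) (Z.part v) ∧ GoodPair G₁ G₂ η γ ρ (Z.part v) (Z.part u)
      symm := ⟨fun u v h => ⟨⟨h.1.1.symm, h.1.2.symm⟩, h.2.2, h.2.1⟩⟩
      loopless := ⟨fun u h => G₁.irrefl h.1.1⟩ }
  refine ⟨G', fun u v h => h.1.1, ?_, fun u v h => h.2.1⟩
  set D := symmDiff G₁.edgeSet G₂.edgeSet with hD
  set Bad : Finset (V × V) := univ.filter fun x =>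
    G₂.Adj x.1 x.2 ∧ ¬ GoodPair G₁ G₂ η γ ρ (Z.part x.1) (Z.part x.2) with hBad
  have h1 : G₁.edgeSet \ G'.edgeSet
      ⊆ (G₁.edgeSet \ G₂.edgeSet) ∪ (fun x : V × V => s(x.1, x.2)) '' (Bad : Set (V × V)) := by
    intro x hx
    induction x using Sym2.ind with
    | _ u v =>
      have hx1 : G₁.Adj u v := hx.1
      have hx2 : ¬ G'.Adj u v := hx.2
      by_cases h2 : G₂.Adj u v
      · right
        by_cases h3 : GoodPair G₁ G₂ η γ ρ (Z.part u) (Z.part v)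
        · have h4 : ¬ GoodPair G₁ G₂ η γ ρ (Z.part v) (Z.part u) :=
            fun h4 => hx2 ⟨⟨hx1, h2⟩, h3, h4⟩
          exact ⟨(v, u), by simp [hBad, h2.symm, h4], Sym2.eq_swap⟩
        · exact ⟨(u, v), by simp [hBad, h2, h3], rfl⟩
      · left
        exact ⟨hx1, h2⟩
  have h2 : (G₁.edgeSet \ G'.edgeSet).ncard ≤ D.ncard + Bad.card := by
    refine (Set.ncard_le_ncard h1 (Set.toFinite _)).trans ((Set.ncard_union_le _ _).trans ?_)
    refine Nat.add_le_add (Set.ncard_le_ncard (fun x hx => Or.inl hx) (Set.toFinite _)) ?_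
    refine (Set.ncard_image_le (Set.toFinite _)).trans ?_
    rw [Set.ncard_coe_finset]
  have h3 : (Bad.card : ℝ)
      ≤ (4 * η + ρ) * (Fintype.card V : ℝ) ^ 2 + 2 * (G₂ \ G₁).edgeSet.ncard / γ := by
    refine le_trans (le_of_eq ?_) (sum_bad_le G₁ G₂ Z hZ η γ ρ hγ hρ hreg)
    rw [hBad, ← Finset.sum_boole, ← Finset.univ_product_univ, Finset.sum_product]
  have h4 : ((G₂ \ G₁).edgeSet.ncard : ℝ) ≤ D.ncard := by
    rw [SimpleGraph.edgeSet_sdiff]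
    exact_mod_cast Set.ncard_le_ncard (fun x hx => Or.inr hx) (Set.toFinite _)
  have h5 : ((G₁.edgeSet \ G'.edgeSet).ncard : ℝ) ≤ D.ncard + Bad.card := by exact_mod_cast h2
  have h6 : 2 * ((G₂ \ G₁).edgeSet.ncard : ℝ) / γ ≤ D.ncard * (2 / γ) := by
    rw [mul_comm, mul_div_assoc]
    exact mul_le_mul_of_nonneg_right h4 (by positivity)
  linarith

/-! ### From homomorphisms to copies, and the final parameters -/

/-- The edges of `H`, each listed once, oriented along a numbering of the vertices. -/
noncomputable def orientedEdges {α : Type*} [Fintype α] (H : SimpleGraph α) (e : α → ℕ) :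
    Finset (α × α) :=
  univ.filter fun p => H.Adj p.1 p.2 ∧ e p.1 < e p.2

lemma homCnt_le_copyCount_add {α V : Type*} [Fintype α] [Fintype V] (H : SimpleGraph α)
    (G : SimpleGraph V) (e : α → ℕ) (he : Function.Injective e) (A : α → Finset V) :
    homCnt A (fun _ => G.Adj) (orientedEdges H e) ≤ copyCount H G +
      ((Fintype.piFinset A).filter fun f => ¬ Function.Injective f).card := by
  have h1 : copyCount H G = (univ.filter fun f : α → V => Function.Injective f ∧
      ∀ ⦃a b : α⦄, H.Adj a b → G.Adj (f a) (f b)).card := by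
    unfold copyCount
    rw [Nat.card_eq_fintype_card, Fintype.card_subtype]
  rw [h1]
  refine le_trans (Finset.card_le_card ?_) (Finset.card_union_le _ _)
  intro f hf
  rw [Finset.mem_filter] at hf
  rw [Finset.mem_union, Finset.mem_filter, Finset.mem_filter]
  by_cases hinj : Function.Injective f
  · left
    refine ⟨Finset.mem_univ _, hinj, fun a b hab => ?_⟩
    rcases lt_or_gt_of_ne (fun h => hab.ne (he h) : e a ≠ e b) with h | h
    · exact hf.2 (a, b) (by simp [orientedEdges, hab, h])
    · exact (hf.2 (b, a) (by simp [orientedEdges, hab.symm, h])).symm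
  · exact Or.inr ⟨hf.1, hinj⟩

/-- For large `n` the non-injective maps are negligible, and a polynomial in `ε` is absorbed into
a power of `S ≥ 1 / ε`. -/
lemma copyCount_ge {α V : Type*} [Fintype α] [Fintype V] (H : SimpleGraph α) (h : ℕ) (hh : 3 ≤ h)
    (hα : Fintype.card α = h) (n S : ℕ) (G : SimpleGraph V) (ε : ℝ) (hε : 0 < ε)
    (hε₀ : ε ≤ 1 / (32 * (h : ℝ) ^ 4)) (hS : 1 / ε ≤ S)
    (hn : (S : ℝ) ^ (2 * h ^ 2 + 2 * h + 3) ≤ n) (e : α → ℕ) (he : Function.Injective e)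
    (A : α → Finset V) (hA : ∀ a, (n : ℝ) ≤ 2 * S * (A a).card)
    (hcount : 2 * ε ^ (2 * h ^ 2 + 1) * ∏ a, ((A a).card : ℝ)
      ≤ homCnt A (fun _ => G.Adj) (orientedEdges H e)) :
    (n : ℝ) ^ h / (S : ℝ) ^ (h * (2 * h ^ 2 + 2 * h + 3)) ≤ copyCount H G := by
  have hh' : (3 : ℝ) ≤ h := by exact_mod_cast hh
  have hh4 : (h : ℝ) ^ 2 ≤ (h : ℝ) ^ 4 := pow_le_pow_right₀ (by linarith) (by norm_num)
  have hh2 : (9 : ℝ) ≤ (h : ℝ) ^ 2 := by nlinarith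
  have hSbig : 32 * (h : ℝ) ^ 4 ≤ S := by
    refine le_trans ?_ hS
    rw [le_div_iff₀ hε]
    rw [le_div_iff₀ (by positivity)] at hε₀
    linarith
  have hS0 : (0 : ℝ) < S := by linarith
  have hS1 : (1 : ℝ) ≤ S := by linarith
  have hn0 : (0 : ℝ) < n := lt_of_lt_of_le (by positivity) hn
  set P := ∏ a, ((A a).card : ℝ) with hP
  have hP0 : 0 ≤ P := Finset.prod_nonneg fun _ _ => by positivity
  set N : ℝ := (((Fintype.piFinset A).filter fun f => ¬ Function.Injective f).card : ℝ) with hN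
  set x : ℝ := 1 / (S : ℝ) ^ (2 * h ^ 2 + 1) with hx
  have hx0 : 0 < x := by positivity
  have hxε : x ≤ ε ^ (2 * h ^ 2 + 1) := by
    have h1 : 1 / (S : ℝ) ≤ ε := by
      rw [div_le_iff₀ hS0]; rw [div_le_iff₀ hε] at hS; linarith
    rw [hx, ← one_div_pow]
    exact pow_le_pow_left₀ (by positivity) h1 _
  set s : ℝ := n / (2 * S) with hs
  have hs0 : 0 < s := by positivity
  have hsA : ∀ a, s ≤ (A a).card := fun a => by
    rw [hs, div_le_iff₀ (by positivity)]; linarith [hA a]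
  have hsx : (h : ℝ) ^ 2 ≤ s * x := by
    have h1 : s * x = n / (2 * S * (S : ℝ) ^ (2 * h ^ 2 + 1)) := by
      rw [hs, hx, div_mul_div_comm, mul_one]
    rw [h1, le_div_iff₀ (by positivity)]
    refine le_trans ?_ hn
    have h2 : (S : ℝ) ^ (2 * h ^ 2 + 2 * h + 3)
        = (S : ℝ) ^ (2 * h + 1) * (S * (S : ℝ) ^ (2 * h ^ 2 + 1)) := by ring
    have h3 : (S : ℝ) ≤ (S : ℝ) ^ (2 * h + 1) := le_self_pow₀ hS1 (by omega)
    have h4 : (h : ℝ) ^ 2 * 2 ≤ (S : ℝ) ^ (2 * h + 1) := by linarith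
    rw [h2]
    calc (h : ℝ) ^ 2 * (2 * S * (S : ℝ) ^ (2 * h ^ 2 + 1))
        = (h : ℝ) ^ 2 * 2 * (S * (S : ℝ) ^ (2 * h ^ 2 + 1)) := by ring
      _ ≤ _ := mul_le_mul_of_nonneg_right h4 (by positivity)
  have hNle : N ≤ x * P := by
    have h1 := card_not_injective A s hsA
    rw [hα] at h1
    refine le_of_mul_le_mul_left ?_ hs0
    calc s * N ≤ (h : ℝ) ^ 2 * P := h1
      _ ≤ s * x * P := mul_le_mul_of_nonneg_right hsx hP0
      _ = _ := by ring
  have hcopy : x * P ≤ copyCount H G := by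
    have h1 : (homCnt A (fun _ => G.Adj) (orientedEdges H e) : ℝ) ≤ copyCount H G + N := by
      rw [hN]; exact_mod_cast homCnt_le_copyCount_add H G e he A
    have h2 : x * P ≤ ε ^ (2 * h ^ 2 + 1) * P := mul_le_mul_of_nonneg_right hxε hP0
    linarith
  have hPs : s ^ h ≤ P := by
    rw [← hα, ← Finset.card_univ, ← Finset.prod_const]
    exact Finset.prod_le_prod (fun _ _ => hs0.le) fun a _ => hsA a
  refine le_trans ?_ hcopy
  refine le_trans ?_ (mul_le_mul_of_nonneg_left hPs hx0.le)
  have h1 : x * s ^ h = (n : ℝ) ^ h / ((S : ℝ) ^ (2 * h ^ 2 + 1) * (2 * S) ^ h) := by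
    rw [hx, hs, div_pow, div_mul_div_comm, one_mul]
  rw [h1]
  refine div_le_div_of_nonneg_left (by positivity) (by positivity) ?_
  have h2 : (2 * (S : ℝ)) ^ h ≤ ((S : ℝ) ^ 2) ^ h :=
    pow_le_pow_left₀ (by positivity) (by nlinarith) _
  calc (S : ℝ) ^ (2 * h ^ 2 + 1) * (2 * S) ^ h
      ≤ (S : ℝ) ^ (2 * h ^ 2 + 1) * ((S : ℝ) ^ 2) ^ h :=
        mul_le_mul_of_nonneg_left h2 (by positivity)
    _ = (S : ℝ) ^ (2 * h ^ 2 + 1 + 2 * h) := by rw [← pow_mul, ← pow_add]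
    _ ≤ _ := pow_le_pow_right₀ hS1 (by nlinarith)

lemma homCnt_mono {α V : Type*} [Fintype α] (A : α → Finset V) (R R' : α × α → V → V → Prop)
    (E : Finset (α × α)) (hR : ∀ p x y, R p x y → R' p x y) : homCnt A R E ≤ homCnt A R' E := by
  refine Finset.card_le_card fun g hg => ?_
  rw [Finset.mem_filter] at hg ⊢
  exact ⟨hg.1, fun p hp => hR _ _ _ (hg.2 p hp)⟩

/-- With `q = h²` and `y = ε ^ (2 h²)`, the main term `y / 2` dominates the regularity errors. -/
lemma main_term_bound (k q y ε η z : ℝ) (hk0 : 0 ≤ k) (hk : k ≤ q) (hq : 9 ≤ q) (hy : 0 < y)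
    (hε : 0 < ε) (hεq : 32 * (q * q) * ε ≤ 1) (hη0 : 0 ≤ η) (hη : η ≤ y * ε) (hz : y ≤ z) :
    2 * (y * ε) ≤ z / 2 - k * (k + 1) * η := by
  have h1 : k * (k + 1) * η ≤ q * (2 * q) * (y * ε) := by
    have h2 : k * (k + 1) ≤ q * (2 * q) :=
      mul_le_mul hk (by linarith) (by linarith) (by linarith)
    exact mul_le_mul h2 hη hη0 (by positivity)
  have h3 : y * (32 * (q * q) * ε) ≤ y * 1 := mul_le_mul_of_nonneg_left hεq hy.le
  have h4 : 81 * (y * ε) ≤ q * q * (y * ε) :=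
    mul_le_mul_of_nonneg_right (by nlinarith) (by positivity)
  nlinarith

/-- The main step: if `G` is far from `H`-free and its packing subgraphs are approximable, then
the parts around a surviving copy of `H` span many homomorphisms of `H`. -/
lemma exists_many_hom {α : Type*} [Fintype α] (H : SimpleGraph α) (hH : ∃ a b, H.Adj a b)
    (h : ℕ) (hh : 3 ≤ h) (hα : Fintype.card α = h) (n S : ℕ) (G : SimpleGraph (Fin n)) (ε η : ℝ)
    (hε : 0 < ε) (hε₀ : ε ≤ 1 / (32 * (h : ℝ) ^ 4)) (hη0 : 0 ≤ η)
    (hη : η ≤ ε ^ (2 * h ^ 2 + 1)) (hn0 : 0 < n)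
    (happrox : ∀ G₁ : SimpleGraph (Fin n), ε ≤ graphDensity G₁ →
      ∃ G₂ : SimpleGraph (Fin n), ((symmDiff G₁.edgeSet G₂.edgeSet).ncard : ℝ)
          ≤ 1 / (32 * (h : ℝ) ^ 4) * G₁.edgeSet.ncard ∧
        ∃ Z : Finpartition (univ : Finset (Fin n)), Z.IsEquipartition ∧
          IsRegularPartition G₂ η Z ∧ Z.parts.card ≤ S)
    (hfar : ∀ G' : SimpleGraph (Fin n), G' ≤ G → copyCount H G' = 0 →
      ε * (n : ℝ) ^ 2 ≤ ((G.edgeSet \ G'.edgeSet).ncard : ℝ))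
    (e : α → ℕ) :
    ∃ A : α → Finset (Fin n), (∀ a, (n : ℝ) ≤ 2 * S * (A a).card) ∧
      2 * ε ^ (2 * h ^ 2 + 1) * ∏ a, ((A a).card : ℝ)
        ≤ homCnt A (fun _ => G.Adj) (orientedEdges H e) := by
  have hh' : (3 : ℝ) ≤ h := by exact_mod_cast hh
  have hh2 : (9 : ℝ) ≤ (h : ℝ) ^ 2 := by nlinarith
  have hh4 : (h : ℝ) ^ 4 = (h : ℝ) ^ 2 * (h : ℝ) ^ 2 := by ring
  set q : ℝ := (h : ℝ) ^ 2 with hq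
  rw [hh4] at hε₀ happrox
  have hn0' : (0 : ℝ) < n := by exact_mod_cast hn0
  have hεq : 32 * (q * q) * ε ≤ 1 := by
    rw [le_div_iff₀ (by positivity)] at hε₀; linarith
  have hε1 : ε ≤ 1 := by nlinarith
  obtain ⟨G₁, hG₁G, hrest, hrobust⟩ := exists_packing H hH G
  set m : ℝ := (G₁.edgeSet.ncard : ℝ) with hm
  have hm1 : ε * (n : ℝ) ^ 2 ≤ m := by
    refine (hfar (G \ G₁) sdiff_le hrest).trans ?_
    rw [SimpleGraph.edgeSet_sdiff, hm]
    exact_mod_cast Set.ncard_le_ncard (fun x hx => by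
      by_contra hx1
      exact hx.2 ⟨hx.1, hx1⟩) (Set.toFinite _)
  have hm0 : 0 < m := lt_of_lt_of_le (by positivity) hm1
  obtain ⟨G₂, hG₂, Z, hZ, hreg, hZS⟩ := happrox G₁ (by
    unfold graphDensity
    rw [Fintype.card_fin, le_div_iff₀ (by positivity), ← hm]
    linarith)
  set γ : ℝ := 1 / (2 * q) with hγ
  set ρ : ℝ := ε / (4 * q) with hρ
  have hγ0 : 0 < γ := by positivity
  have hρ0 : 0 < ρ := by positivity
  obtain ⟨G', hG'G₁, hlost, hgood⟩ := exists_clean G₁ G₂ Z hZ η γ ρ hγ0 hρ0.le hreg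
  rw [Fintype.card_fin] at hlost
  -- fewer than `m / h²` edges of `G₁` are lost
  have hηε : 4 * η ≤ ρ := by
    have h1 : ε ^ (2 * h ^ 2 + 1) ≤ ε ^ 2 :=
      pow_le_pow_of_le_one hε.le hε1 (by nlinarith)
    rw [hρ, le_div_iff₀ (by positivity)]
    have h2 : η ≤ ε * ε := by linarith [sq ε]
    have h3 : 4 * η * (4 * q) ≤ 4 * (ε * ε) * (4 * q) := by gcongr
    have h4 : 16 * q * ε ≤ 1 := by nlinarith
    nlinarith
  have hlost' : q * ((G₁.edgeSet \ G'.edgeSet).ncard : ℝ) ≤ 3 / 4 * m := by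
    have h1 : ((symmDiff G₁.edgeSet G₂.edgeSet).ncard : ℝ) * (1 + 2 / γ) ≤ m / (4 * q) := by
      have h2 : 1 + 2 / γ = 1 + 4 * q := by rw [hγ]; field_simp; ring
      rw [h2]
      calc _ ≤ 1 / (32 * (q * q)) * m * (1 + 4 * q) :=
            mul_le_mul_of_nonneg_right hG₂ (by positivity)
        _ ≤ 1 / (32 * (q * q)) * m * (8 * q) :=
            mul_le_mul_of_nonneg_left (by linarith) (by positivity)
        _ = m / (4 * q) := by field_simp; ring
    have h2 : (4 * η + ρ) * (n : ℝ) ^ 2 ≤ m / (2 * q) := by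
      calc (4 * η + ρ) * (n : ℝ) ^ 2 ≤ (2 * ρ) * (n : ℝ) ^ 2 := by
            refine mul_le_mul_of_nonneg_right (by linarith) (by positivity)
        _ = ε * (n : ℝ) ^ 2 / (2 * q) := by rw [hρ]; field_simp; ring
        _ ≤ _ := by gcongr
    calc q * ((G₁.edgeSet \ G'.edgeSet).ncard : ℝ) ≤ q * (m / (4 * q) + m / (2 * q)) :=
          mul_le_mul_of_nonneg_left (by linarith) (by positivity)
      _ = 3 / 4 * m := by field_simp; ring
  have hex : ¬ copyCount H G' = 0 := by
    intro h0
    have h1 := hrobust G' hG'G₁ h0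
    rw [hα] at h1
    have h2 : m ≤ q * ((G₁.edgeSet \ G'.edgeSet).ncard : ℝ) := by
      rw [hm, hq]; exact_mod_cast h1
    linarith
  rw [copyCount_eq_zero_iff] at hex
  push Not at hex
  obtain ⟨f, -, hf⟩ := hex
  have hpart : ∀ a, Z.part (f a) ∈ Z.parts := fun a => Z.part_mem.2 (Finset.mem_univ _)
  have hne : ∀ a, (Z.part (f a)).Nonempty := fun a => ⟨f a, Z.mem_part (Finset.mem_univ _)⟩
  refine ⟨fun a => Z.part (f a), fun a => ?_, ?_⟩
  · have h1 := hZ.average_le_card_part (hpart a)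
    have hkn : Z.parts.card ≤ n := by simpa using Z.card_parts_le_card
    have hk0 : 0 < Z.parts.card := Finset.card_pos.2 ⟨_, hpart a⟩
    rw [Finset.card_univ, Fintype.card_fin] at h1
    have h2 : n < Z.parts.card * (n / Z.parts.card + 1) := Nat.lt_mul_div_succ n hk0
    have h3 : 1 ≤ n / Z.parts.card := Nat.div_pos hkn hk0
    have h4 : n ≤ 2 * S * (Z.part (f a)).card := by
      calc n ≤ Z.parts.card * (n / Z.parts.card + 1) := h2.le
        _ ≤ S * (2 * (Z.part (f a)).card) := Nat.mul_le_mul hZS (by omega)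
        _ = _ := by ring
    exact_mod_cast h4
  · set E := orientedEdges H e with hE
    have hEc : E.card ≤ h ^ 2 := by
      refine (Finset.card_filter_le _ _).trans ?_
      simp [hα, sq]
    have hEq : (E.card : ℝ) ≤ q := by rw [hq]; exact_mod_cast hEc
    have hEmem : ∀ p ∈ E, H.Adj p.1 p.2 ∧ e p.1 < e p.2 := by
      intro p hp
      exact (Finset.mem_filter.1 hp).2
    have hpair : ∀ p ∈ E, GoodPair G₁ G₂ η γ ρ (Z.part (f p.1)) (Z.part (f p.2)) :=
      fun p hp => hgood _ _ (hf (hEmem p hp).1)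
    have hcg := count_good G₁ G₂ (fun a => Z.part (f a)) hne e E (fun p hp => (hEmem p hp).2)
      η γ ρ hη0 hρ0.le (fun p hp => (hpair p hp).1) (fun p hp => (hpair p hp).2.2)
      (fun p hp => (hpair p hp).2.1) (by
        calc (E.card : ℝ) * γ ≤ q * γ := mul_le_mul_of_nonneg_right hEq hγ0.le
          _ = 1 / 2 := by rw [hγ]; field_simp)
    have hmono : homCnt (fun a => Z.part (f a)) (fun _ => (G₁ ⊓ G₂).Adj) E
        ≤ homCnt (fun a => Z.part (f a)) (fun _ => G.Adj) E := 
      homCnt_mono _ _ _ _ fun _ _ _ hxy => hG₁G hxy.1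
    have hmono' : (homCnt (fun a => Z.part (f a)) (fun _ => (G₁ ⊓ G₂).Adj) E : ℝ)
        ≤ homCnt (fun a => Z.part (f a)) (fun _ => G.Adj) E := by exact_mod_cast hmono
    refine le_trans ?_ (hcg.trans hmono')
    refine mul_le_mul_of_nonneg_right ?_ (Finset.prod_nonneg fun _ _ => Nat.cast_nonneg _)
    -- `ρ ≥ ε²`, so the densities contribute at least `ε ^ (2 h²)`
    have hερ : ε ^ 2 ≤ ρ := by
      rw [hρ, le_div_iff₀ (by positivity)]
      have : 4 * q * ε ≤ 1 := by nlinarith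
      nlinarith
    have hpow : ε ^ (2 * h ^ 2) ≤ ρ ^ E.card := by
      have hρ1 : ε ^ 2 ≤ 1 := pow_le_one₀ hε.le hε1
      calc ε ^ (2 * h ^ 2) = (ε ^ 2) ^ (h ^ 2) := by rw [pow_mul]
        _ ≤ (ε ^ 2) ^ E.card := pow_le_pow_of_le_one (by positivity) hρ1 hEc
        _ ≤ ρ ^ E.card := pow_le_pow_left₀ (by positivity) hερ _
    rw [pow_succ] at hη ⊢
    have := main_term_bound E.card q _ ε η _ (Nat.cast_nonneg _) hEq hh2
      (pow_pos hε (2 * h ^ 2)) hε hεq hη0 hη hpow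
    linarith

/-- The approximation hypothesis for a complete graph and the partition into singletons already
forces `S ≥ 1 / ε`. -/
lemma one_div_le_of_approx (ε C δ₀ η : ℝ) (S : ℕ) (hε : 0 < ε) (hε₀ : ε ≤ 1 / 2) (hC : 2 ≤ C)
    (happrox : ∀ (m : ℕ) (G₁ : SimpleGraph (Fin m)),
          ε ≤ graphDensity G₁ →
          ∀ P₀ : Finpartition (univ : Finset (Fin m)), P₀.IsEquipartition →
            (P₀.parts.card : ℝ) ≤ ε ^ (-C) →
          ∃ G₂ : SimpleGraph (Fin m),
            ((symmDiff G₁.edgeSet G₂.edgeSet).ncard : ℝ) ≤ δ₀ * G₁.edgeSet.ncard ∧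
            ∃ Z : Finpartition (univ : Finset (Fin m)), Z.IsEquipartition ∧ Z ≤ P₀ ∧
              IsRegularPartition G₂ η Z ∧ Z.parts.card ≤ S) :
    1 / ε ≤ S := by
  set M := ⌈1 / ε⌉₊ with hM
  have hM1 : 1 / ε ≤ M := Nat.le_ceil _
  have hM2 : (M : ℝ) < 1 / ε + 1 := Nat.ceil_lt_add_one (by positivity)
  have hε2 : 2 ≤ 1 / ε := by rw [le_div_iff₀ hε]; linarith
  have hM3 : (2 : ℝ) ≤ M := hε2.trans hM1
  have hM3' : 2 ≤ M := by exact_mod_cast hM3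
  obtain ⟨G₂, -, Z, -, hZ, -, hZS⟩ := happrox M ⊤ (by
      unfold graphDensity
      rw [← SimpleGraph.coe_edgeFinset, Set.ncard_coe_finset,
        SimpleGraph.card_edgeFinset_top_eq_card_choose_two, Fintype.card_fin,
        Nat.cast_choose_two, le_div_iff₀ (by positivity)]
      nlinarith) ⊥ (Finpartition.bot_isEquipartition _) (by
      rw [Finpartition.card_bot, Finset.card_univ, Fintype.card_fin]
      calc (M : ℝ) ≤ (1 / ε) * (1 / ε) := by nlinarith
        _ = ε ^ (-(2 : ℝ)) := by
          rw [Real.rpow_neg hε.le, Real.rpow_two]; field_simp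
        _ ≤ ε ^ (-C) := Real.rpow_le_rpow_of_exponent_ge hε (by linarith) (by linarith))
  have h1 := Finpartition.card_mono hZ
  rw [Finpartition.card_bot, Finset.card_univ, Fintype.card_fin] at h1
  refine hM1.trans ?_
  exact_mod_cast h1.trans hZS

/-- **The graph removal lemma via SRAL (Theorem 1.2).**
For every `h ≥ 3` there are `ε₀, δ₀, C > 0` such that for every graph `H` on `h` vertices,
every `ε ≤ ε₀` and every `S`: if every graph `G₁` of density at least `ε` together with every
equipartition `P₀` of order at most `ε^{-C}` can be turned, by adding/removing at most
`δ₀|E(G₁)|` edges, into a graph having an `ε^C`-regular equipartition refining `P₀` of order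
at most `S`, then every `n`-vertex graph that cannot be made `H`-free by deleting fewer than
`εn²` edges contains at least `n^h / S^C` copies of `H`. -/
theorem removal_via_sral (h : ℕ) (hh : 3 ≤ h) :
    ∃ ε₀ δ₀ C : ℝ, 0 < ε₀ ∧ 0 < δ₀ ∧ 0 < C ∧
      ∀ (α : Type) (_ : Fintype α) (H : SimpleGraph α), Fintype.card α = h →
      ∀ ε : ℝ, 0 < ε → ε ≤ ε₀ →
      ∀ S : ℕ, 0 < S →
      (∀ (m : ℕ) (G₁ : SimpleGraph (Fin m)),
          ε ≤ graphDensity G₁ →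
          ∀ P₀ : Finpartition (univ : Finset (Fin m)), P₀.IsEquipartition →
            (P₀.parts.card : ℝ) ≤ ε ^ (-C) →
          ∃ G₂ : SimpleGraph (Fin m),
            ((symmDiff G₁.edgeSet G₂.edgeSet).ncard : ℝ) ≤ δ₀ * G₁.edgeSet.ncard ∧
            ∃ Z : Finpartition (univ : Finset (Fin m)), Z.IsEquipartition ∧ Z ≤ P₀ ∧
              IsRegularPartition G₂ (ε ^ C) Z ∧ Z.parts.card ≤ S) →
      ∀ (n : ℕ) (G : SimpleGraph (Fin n)),
        (∀ G' : SimpleGraph (Fin n), G' ≤ G → copyCount H G' = 0 →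
          ε * (n : ℝ) ^ 2 ≤ ((G.edgeSet \ G'.edgeSet).ncard : ℝ)) →
        (n : ℝ) ^ h / (S : ℝ) ^ C ≤ copyCount H G := by

  have hh' : (3 : ℝ) ≤ h := by exact_mod_cast hh
  have hh4 : (81 : ℝ) ≤ (h : ℝ) ^ 4 := by
    calc (81 : ℝ) = 3 ^ 4 := by norm_num
      _ ≤ (h : ℝ) ^ 4 := pow_le_pow_left₀ (by norm_num) hh' 4
  set c : ℕ := h * (2 * h ^ 2 + 2 * h + 3) with hc
  have hc1 : 2 * h ^ 2 + 1 ≤ c := by rw [hc]; nlinarith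
  refine ⟨1 / (32 * (h : ℝ) ^ 4), 1 / (32 * (h : ℝ) ^ 4), c, by positivity, by positivity,
    by exact_mod_cast (by omega : 0 < c), ?_⟩
  intro α _ H hα ε hε hε₀ S hS0 happrox n G hfar
  have hε2 : ε ≤ 1 / 2 := by
    refine hε₀.trans (one_div_le_one_div_of_le (by norm_num) (by linarith))
  have hSε : 1 / ε ≤ S := one_div_le_of_approx ε c _ _ S hε hε2
    (by exact_mod_cast (by nlinarith : 2 ≤ c)) happrox
  have hS1 : (1 : ℝ) ≤ S := by exact_mod_cast hS0
  rw [Real.rpow_natCast]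
  rcases Nat.eq_zero_or_pos n with hn0 | hn0
  · subst hn0
    simp [show h ≠ 0 by omega]
  rcases lt_or_ge (n : ℝ) ((S : ℝ) ^ (2 * h ^ 2 + 2 * h + 3)) with hn | hn
  · -- a single copy suffices
    have h1 : 1 ≤ copyCount H G := by
      by_contra h2
      have h3 := hfar G le_rfl (by omega)
      have h4 : (0 : ℝ) < ε * (n : ℝ) ^ 2 := by positivity
      simp only [sdiff_self, Set.bot_eq_empty, Set.ncard_empty, Nat.cast_zero] at h3
      linarith
    have h2 : (n : ℝ) ^ h / (S : ℝ) ^ c ≤ 1 := by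
      refine div_le_one_of_le₀ ?_ (by positivity)
      rw [hc, mul_comm, pow_mul]
      exact pow_le_pow_left₀ (by positivity) hn.le _
    exact h2.trans (by exact_mod_cast h1)
  · set e : α → ℕ := fun a => Fintype.equivFin α a with he
    have hinj : Function.Injective e := fun a b hab =>
      (Fintype.equivFin α).injective (Fin.val_injective hab)
    have hmany : ∃ A : α → Finset (Fin n), (∀ a, (n : ℝ) ≤ 2 * S * (A a).card) ∧
        2 * ε ^ (2 * h ^ 2 + 1) * ∏ a, ((A a).card : ℝ)
          ≤ homCnt A (fun _ => G.Adj) (orientedEdges H e) := by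
      by_cases hH : ∃ a b, H.Adj a b
      · refine exists_many_hom H hH h hh hα n S G ε (ε ^ (c : ℝ)) hε hε₀ (by positivity) ?_ hn0
          (fun G₁ hG₁ => ?_) hfar e
        · rw [Real.rpow_natCast]
          exact pow_le_pow_of_le_one hε.le (by linarith) hc1
        · obtain ⟨P₀, hP₀, hcard⟩ := Finpartition.exists_equipartition_card_eq
            (univ : Finset (Fin n)) one_ne_zero (by
              rw [Finset.card_univ, Fintype.card_fin]; exact hn0)
          obtain ⟨G₂, hG₂, Z, hZ, -, hreg, hZS⟩ := happrox n G₁ hG₁ P₀ hP₀ (by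
            rw [hcard, Nat.cast_one]
            exact Real.one_le_rpow_of_pos_of_le_one_of_nonpos hε (by linarith)
              (neg_nonpos.2 (Nat.cast_nonneg _)))
          exact ⟨G₂, hG₂, Z, hZ, hreg, hZS⟩
      · -- without edges there is no constraint on the maps
        have hE : orientedEdges H e = ∅ :=
          Finset.filter_eq_empty_iff.2 fun p _ hp => hH ⟨p.1, p.2, hp.1⟩
        refine ⟨fun _ => univ, fun a => ?_, ?_⟩
        · rw [Finset.card_univ, Fintype.card_fin]
          nlinarith [Nat.cast_nonneg (α := ℝ) n]
        · rw [hE, homCnt_empty]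
          refine mul_le_of_le_one_left (Finset.prod_nonneg fun _ _ => Nat.cast_nonneg _) ?_
          have : ε ^ (2 * h ^ 2 + 1) ≤ ε := pow_le_of_le_one hε.le (by linarith) (by omega)
          linarith
    obtain ⟨A, hA, hcount⟩ := hmany
    exact copyCount_ge H h hh hα n S G ε hε hε₀ hSε hn e hinj A hA hcount
end

section
/- Let d₁,…,d_N, p₁,…,p_N ≥ 0 be real numbers with Σ_{i=1}^N p_i = 1 and d := Σ_{i=1}^N p_i d_i ≠ 0. Then Σ_{i=1}^N p_i H(d_i) − H(d) ≥ (1/2) · d · (Σ_{i=1}^N p_i |d_i/d − 1|)², where H(x) = x ln x (with 0 ln 0 = 0). -/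
/-!
After dividing by `D = ∑ p i * d i`, this is Pinsker's inequality for the density `x i = d i / D`,
which has mean `1` under `p`. It follows from the pointwise bound
`3 (x - 1)² ≤ (2 x + 4) (x log x + 1 - x)` for `x ≥ 0` (`three_mul_sq_le`) and the Cauchy–Schwarz
inequality, since `∑ p i * (2 * x i + 4) / 3 = 2` and the terms `1 - x i` average to zero.
-/

/-- The derivative of `log x - (x - 1) (5 x + 1) / (2 x (x + 2))` is a cube `(x - 1)³` times a
positive factor, which makes the minimum at `x = 1` visible. -/
lemma hasDerivAt_log_sub {x : ℝ} (hx : 0 < x) :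
    HasDerivAt (fun y : ℝ => Real.log y - (y - 1) * (5 * y + 1) / (2 * y * (y + 2)))
      ((x - 1) ^ 3 / (x ^ 2 * (x + 2) ^ 2)) x := by
  have hden : 2 * x * (x + 2) ≠ 0 := by positivity
  have hnum : HasDerivAt (fun y : ℝ => (y - 1) * (5 * y + 1))
      (1 * (5 * x + 1) + (x - 1) * (5 * 1)) x :=
    ((hasDerivAt_id' x).sub_const 1).mul (((hasDerivAt_id' x).const_mul 5).add_const 1)
  have hden' : HasDerivAt (fun y : ℝ => 2 * y * (y + 2)) (2 * 1 * (x + 2) + 2 * x * 1) x :=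
    ((hasDerivAt_id' x).const_mul 2).mul ((hasDerivAt_id' x).add_const 2)
  refine ((Real.hasDerivAt_log hx.ne').sub (hnum.div hden' hden)).congr_deriv ?_
  have : x + 2 ≠ 0 := by positivity
  field_simp
  ring

lemma le_log_of_pos {x : ℝ} (hx : 0 < x) :
    (x - 1) * (5 * x + 1) / (2 * x * (x + 2)) ≤ Real.log x := by
  set G : ℝ → ℝ := fun y => Real.log y - (y - 1) * (5 * y + 1) / (2 * y * (y + 2)) with hG
  have hG1 : G 1 = 0 := by simp [hG]
  suffices h : G 1 ≤ G x by
    rw [hG1] at h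
    exact sub_nonneg.mp h
  rcases le_total x 1 with h1 | h1
  · have hanti : AntitoneOn G (Set.Icc x 1) := by
      refine antitoneOn_of_hasDerivWithinAt_nonpos (convex_Icc x 1)
        (fun y hy => (hasDerivAt_log_sub (hx.trans_le hy.1)).continuousAt.continuousWithinAt)
        (fun y hy => (hasDerivAt_log_sub
          (hx.trans_le (interior_subset hy).1)).hasDerivWithinAt) (fun y hy => ?_)
      have hy1 : y - 1 ≤ 0 := sub_nonpos.mpr (interior_subset hy).2
      exact div_nonpos_of_nonpos_of_nonneg (Odd.pow_nonpos (by decide) hy1) (by positivity)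
    exact hanti ⟨le_rfl, h1⟩ ⟨h1, le_rfl⟩ h1
  · have hmono : MonotoneOn G (Set.Icc 1 x) := by
      refine monotoneOn_of_hasDerivWithinAt_nonneg (convex_Icc 1 x)
        (fun y hy => (hasDerivAt_log_sub
          (one_pos.trans_le hy.1)).continuousAt.continuousWithinAt)
        (fun y hy => (hasDerivAt_log_sub
          (one_pos.trans_le (interior_subset hy).1)).hasDerivWithinAt) (fun y hy => ?_)
      have hy1 : 0 ≤ y - 1 := sub_nonneg.mpr (interior_subset hy).1
      positivity
    exact hmono ⟨le_rfl, h1⟩ ⟨h1, le_rfl⟩ h1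

/-- The pointwise bound behind Pinsker's inequality: for `x > 0` it is `le_log_of_pos` with
denominators cleared. -/
lemma three_mul_sq_le {x : ℝ} (hx : 0 ≤ x) :
    3 * (x - 1) ^ 2 ≤ (2 * x + 4) * (x * Real.log x + 1 - x) := by
  rcases hx.eq_or_lt with rfl | hx
  · norm_num
  · have h := le_log_of_pos hx
    rw [div_le_iff₀ (by positivity)] at h
    nlinarith

/-- Pinsker's inequality for a density `x` of mean `1` with respect to the weights `p`. -/
lemma pinsker_of_mean_one {ι : Type*} [Fintype ι] (p x : ι → ℝ) (hp : ∀ i, 0 ≤ p i)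
    (hx : ∀ i, 0 ≤ x i) (hsum : ∑ i, p i = 1) (hmean : ∑ i, p i * x i = 1) :
    (∑ i, p i * |x i - 1|) ^ 2 ≤ 2 * ∑ i, p i * (x i * Real.log (x i)) := by
  have hcs := Finset.sum_sq_le_sum_mul_sum_of_sq_le_mul Finset.univ
    (r := fun i => p i * |x i - 1|) (f := fun i => p i * ((2 * x i + 4) / 3))
    (g := fun i => p i * (x i * Real.log (x i) + 1 - x i))
    (fun i _ => by have := hx i; have := hp i; positivity)
    (fun i _ => mul_nonneg (hp i) (InformationTheory.klFun_nonneg (hx i)))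
    (fun i _ => by
      rw [mul_pow, sq_abs]
      have := mul_le_mul_of_nonneg_left (three_mul_sq_le (hx i)) (sq_nonneg (p i))
      linarith)
  have hf : ∑ i, p i * ((2 * x i + 4) / 3) = 2 := by
    calc ∑ i, p i * ((2 * x i + 4) / 3) = ∑ i, (2 / 3 * (p i * x i) + 4 / 3 * p i) :=
          Finset.sum_congr rfl fun i _ => by ring
      _ = 2 := by
          rw [Finset.sum_add_distrib, ← Finset.mul_sum, ← Finset.mul_sum, hsum, hmean]
          norm_num
  have hg : ∑ i, p i * (x i * Real.log (x i) + 1 - x i) =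
      ∑ i, p i * (x i * Real.log (x i)) := by
    calc ∑ i, p i * (x i * Real.log (x i) + 1 - x i)
        = ∑ i, (p i * (x i * Real.log (x i)) + p i - p i * x i) :=
          Finset.sum_congr rfl fun i _ => by ring
      _ = _ := by
          rw [Finset.sum_sub_distrib, Finset.sum_add_distrib, hsum, hmean]
          ring
  rwa [hf, hg] at hcs

/-- **Uniform defect inequality for `H(x) = x ln x` (Lemma 3.1).**
If `d₁,…,d_N, p₁,…,p_N ≥ 0` with `Σ p_i = 1` and `d := Σ p_i d_i ≠ 0`, then
`Σ p_i H(d_i) − H(d) ≥ (1/2)·d·(Σ p_i |d_i/d − 1|)²`, where `H(x) = x ln x`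
(with the convention `0 ln 0 = 0`, which holds for `Real.log`). -/
theorem entropy_defect (N : ℕ) (d p : Fin N → ℝ)
    (hd : ∀ i, 0 ≤ d i) (hp : ∀ i, 0 ≤ p i)
    (hsum : ∑ i, p i = 1) (hD : ∑ i, p i * d i ≠ 0) :
    (1 / 2) * (∑ i, p i * d i) * (∑ i, p i * |d i / (∑ j, p j * d j) - 1|) ^ 2 ≤
      (∑ i, p i * (d i * Real.log (d i))) -
        (∑ i, p i * d i) * Real.log (∑ i, p i * d i) := by

  set D := ∑ i, p i * d i with hDdef
  have hDpos : 0 < D :=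
    lt_of_le_of_ne (Finset.sum_nonneg fun i _ => mul_nonneg (hp i) (hd i)) hD.symm
  have hmean : ∑ i, p i * (d i / D) = 1 := by
    rw [← div_self hD]
    nth_rewrite 2 [hDdef]
    rw [Finset.sum_div]
    exact Finset.sum_congr rfl fun i _ => by ring
  have hpin := pinsker_of_mean_one p (fun i => d i / D) hp
    (fun i => div_nonneg (hd i) hDpos.le) hsum hmean
  have hscale : D * ∑ i, p i * (d i / D * Real.log (d i / D)) =
      (∑ i, p i * (d i * Real.log (d i))) - D * Real.log D := by
    nth_rewrite 4 [hDdef]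
    rw [Finset.mul_sum, Finset.sum_mul, ← Finset.sum_sub_distrib]
    refine Finset.sum_congr rfl fun i _ => ?_
    rcases eq_or_ne (d i) 0 with h0 | h0
    · simp [h0]
    · rw [Real.log_div h0 hD]
      field_simp
  rw [← hscale]
  have := mul_le_mul_of_nonneg_left hpin hDpos.le
  linarith
end

section
/- Let G be a graph, let A, A' be subsets of V(G), let P be a partition of A and P' a partition of A', and let Q be a refinement of P and Q' a refinement of P'. Then H(Q,Q') ≥ H(P,P'). -/
/-!
The function `H(x) = x ln x` is convex on `[0,∞)`, and the density `d(W,W')` is the average of the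
densities `d(U,U')` over the pairs of parts of any partitions of `W` and `W'`, weighted by
`|U||U'|`. Jensen's inequality therefore bounds the contribution of each pair `(W,W')` of parts of
`P`, `P'` by the total contribution of the pairs `(U,U')` of parts of `Q`, `Q'` with `U ⊆ W` and
`U' ⊆ W'` (`card_mul_Hent_dens_le`). Since `Q` refines `P` and `Q'` refines `P'`, each pair of
parts of `Q`, `Q'` lies in exactly one such `(W,W')`, so summing gives the claim.
-/

open Finset
open scoped Classical

/-- The function `H(x) = x ln x` (with `0 ln 0 = 0`, which holds for `Real.log`). -/
noncomputable def Hent (x : ℝ) : ℝ := x * Real.log x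

/-- The entropy potential `H(P,P')` of a partition `P` of `A ⊆ V(G)` and a partition `P'`
of `A' ⊆ V(G)`: `H(P,P') = Σ_{W ∈ P, W' ∈ P'} (|W||W'|/(|A||A'|))·H(d(W,W'))`. -/
noncomputable def pot {V : Type*} [Fintype V] [DecidableEq V] (G : SimpleGraph V)
    {A A' : Finset V} (P : Finpartition A) (P' : Finpartition A') : ℝ :=
  ∑ W ∈ P.parts, ∑ W' ∈ P'.parts,
    ((W.card : ℝ) * W'.card / ((A.card : ℝ) * A'.card)) * Hent (dens G W W')

lemma card_mul_card_mul_dens {V : Type*} [Fintype V] (G : SimpleGraph V) (U U' : Finset V) :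
    (U.card : ℝ) * U'.card * dens G U U' = eCnt G U U' := by
  unfold _root_.dens
  rcases eq_or_ne ((U.card : ℝ) * U'.card) 0 with h | h
  · -- an empty side leaves no edges, matching the junk value of the division
    have : U = ∅ ∨ U' = ∅ := by simpa using h
    rcases this with rfl | rfl <;> simp [eCnt]
  · exact mul_div_cancel₀ _ h

/-- The parts of `Q` contained in a part `W` of a coarser partition `P` form a partition of `W`. -/
def partsWithin {V : Type*} [DecidableEq V] {A : Finset V} {P Q : Finpartition A}
    (hQ : Q ≤ P) {W : Finset V} (hW : W ∈ P.parts) : Finpartition W :=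
  Q.ofSubset (parts := {U ∈ Q.parts | U ⊆ W}) (filter_subset _ _) <| by
    ext x
    simp only [mem_sup, mem_filter, id]
    constructor
    · rintro ⟨U, ⟨-, hUW⟩, hx⟩
      exact hUW hx
    · intro hx
      obtain ⟨U, hU, hxU⟩ := Q.exists_mem (P.subset hW hx)
      obtain ⟨W₂, hW₂, hUW₂⟩ := hQ hU
      obtain rfl := P.eq_of_mem_parts hW hW₂ hx (hUW₂ hxU)
      exact ⟨U, ⟨hU, hUW₂⟩, hxU⟩

/-- Each part of a refinement `Q` of `P` lies in exactly one part of `P`. -/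
lemma sum_parts_eq_sum_partsWithin {V : Type*} [DecidableEq V] {A : Finset V}
    {P Q : Finpartition A} (hQ : Q ≤ P) (f : Finset V → ℝ) :
    ∑ U ∈ Q.parts, f U = ∑ W ∈ P.parts.attach, ∑ U ∈ (partsWithin hQ W.2).parts, f U := by
  have h : ∑ W ∈ P.parts.attach, ∑ U ∈ (partsWithin hQ W.2).parts, f U
      = ∑ W ∈ P.parts, ∑ U ∈ Q.parts with U ⊆ W, f U :=
    sum_attach P.parts fun W => ∑ U ∈ Q.parts with U ⊆ W, f U
  rw [h]
  simp_rw [sum_filter]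
  rw [sum_comm]
  refine sum_congr rfl fun U hU => ?_
  obtain ⟨W, hW, hUW⟩ := hQ hU
  obtain ⟨x, hx⟩ := Q.nonempty_of_mem_parts hU
  rw [sum_eq_single_of_mem W hW, if_pos hUW]
  intro W₂ hW₂ hne
  exact if_neg fun hUW₂ => hne (P.eq_of_mem_parts hW₂ hW (hUW₂ hx) (hUW hx))

/-- Jensen's inequality for `x ln x`, applied to the densities between the parts of partitions of
`W` and `W'`. -/
lemma card_mul_Hent_dens_le {V : Type*} [Fintype V] [DecidableEq V] (G : SimpleGraph V)
    {W W' : Finset V} (R : Finpartition W) (R' : Finpartition W') (hW : W.Nonempty)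
    (hW' : W'.Nonempty) :
    (W.card : ℝ) * W'.card * Hent (dens G W W') ≤
      ∑ U ∈ R.parts, ∑ U' ∈ R'.parts, (U.card : ℝ) * U'.card * Hent (dens G U U') := by
  have hcard : ∑ p ∈ R.parts ×ˢ R'.parts, (p.1.card : ℝ) * p.2.card = W.card * W'.card := by
    simp only [sum_product, ← sum_mul_sum]
    exact_mod_cast congrArg₂ (· * ·) R.sum_card_parts R'.sum_card_parts
  have hedge : ∑ p ∈ R.parts ×ˢ R'.parts, (eCnt G p.1 p.2 : ℝ) = eCnt G W W' := by
    exact_mod_cast (Rel.card_interedges_finpartition G.Adj R R').symm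
  have hpos : 0 < (W.card : ℝ) * W'.card := by
    have := hW.card_pos
    have := hW'.card_pos
    positivity
  have key := Real.convexOn_mul_log.map_centerMass_le (t := R.parts ×ˢ R'.parts)
    (w := fun p => (p.1.card : ℝ) * p.2.card) (p := fun p => dens G p.1 p.2)
    (fun p _ => by positivity) (by rwa [hcard])
    (fun p _ => by simp only [Set.mem_Ici, _root_.dens]; positivity)
  simp only [centerMass, smul_eq_mul, hcard, card_mul_card_mul_dens, hedge, Function.comp_def] at key
  rw [← sum_product', mul_comm, ← le_div_iff₀ hpos, div_eq_inv_mul]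
  simpa only [Hent, _root_.dens, div_eq_inv_mul] using key

/-- **Monotonicity of the potential under refinement (Claim 3.4(ii)).**
If `Q` refines `P` (partitions of `A ⊆ V(G)`) and `Q'` refines `P'` (partitions of
`A' ⊆ V(G)`), then `H(Q,Q') ≥ H(P,P')`. -/
theorem potential_mono_refine {V : Type*} [Fintype V] [DecidableEq V] (G : SimpleGraph V)
    (A A' : Finset V) (P Q : Finpartition A) (P' Q' : Finpartition A')
    (hQ : Q ≤ P) (hQ' : Q' ≤ P') :
    pot G P P' ≤ pot G Q Q' := by
  unfold pot
  simp_rw [div_mul_eq_mul_div, ← sum_div]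
  refine div_le_div_of_nonneg_right ?_ (by positivity)
  rw [sum_parts_eq_sum_partsWithin hQ, ← sum_attach P.parts]
  refine sum_le_sum fun W _ => ?_
  simp_rw [sum_parts_eq_sum_partsWithin hQ']
  rw [sum_comm, ← sum_attach P'.parts]
  exact sum_le_sum fun W' _ => card_mul_Hent_dens_le G _ _
    (P.nonempty_of_mem_parts W.2) (P'.nonempty_of_mem_parts W'.2)
end

section
/- Let G = (V,E) be a graph, let P = {V₁,…,V_k} be a partition of V into k parts all of exactly the same size, and let Q be a weak ε-regular partition of V refining P. Then for every pair a ≠ b, the partition Q|_{V_a} ∪ Q|_{V_b} of the induced bipartite graph G[V_a,V_b] is weak εk-regular in the bipartite sense: for every S ⊆ V_a and T ⊆ V_b with |S| ≥ εk|V_a| and |T| ≥ εk|V_b|, one has Σ_{U ∈ Q|_{V_a}, U' ∈ Q|_{V_b}} (|S ∩ U||T ∩ U'|/(|S||T|)) · |d(S ∩ U, T ∩ U') − d(U,U')| ≤ εk. -/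
/-!
Since all parts of `P` have the same size, `k|V_a| = |V|`, so `S` and `T` are large enough to
test the weak `ε`-regularity of `Q` directly. The bipartite sum is a subsum of the resulting sum
of nonnegative terms, hence at most `ε`, which is at most `εk` because `0 ≤ ε` and `1 ≤ k`.
-/

open Finset
open scoped Classical

/-- A partition `{V₁,…,V_k}` of the vertex set is weak `ε`-regular if for all disjoint
`S, T ⊆ V` with `|S|, |T| ≥ ε|V|` we have
`Σ_{i,j} (|S ∩ V_i||T ∩ V_j|/(|S||T|))·|d(S ∩ V_i, T ∩ V_j) − d(V_i,V_j)| ≤ ε`. -/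
def IsWeakRegular {V : Type*} [Fintype V] [DecidableEq V] (G : SimpleGraph V) (ε : ℝ)
    (P : Finpartition (univ : Finset V)) : Prop :=
  ∀ S T : Finset V, Disjoint S T →
    ε * Fintype.card V ≤ S.card → ε * Fintype.card V ≤ T.card →
    ∑ U ∈ P.parts, ∑ U' ∈ P.parts,
      ((S ∩ U).card : ℝ) * ((T ∩ U').card : ℝ) / (S.card * T.card) *
        |dens G (S ∩ U) (T ∩ U') - dens G U U'| ≤ ε

/-- **Weak regularity is inherited by the induced bipartite graphs (Claim 3.9).**
Let `P = {V₁,…,V_k}` be a partition of `V(G)` into parts of exactly the same size, and let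
`Q` be a weak `ε`-regular partition refining `P`. Then for all distinct `V_a, V_b ∈ P`,
the partition `Q|_{V_a} ∪ Q|_{V_b}` of the bipartite graph `G[V_a,V_b]` is weak
`εk`-regular in the bipartite sense. -/
theorem induced_weak_regular {V : Type*} [Fintype V] [DecidableEq V] (G : SimpleGraph V)
    (ε : ℝ) (P Q : Finpartition (univ : Finset V))
    (hsize : ∀ W ∈ P.parts, ∀ W' ∈ P.parts, W.card = W'.card)
    (hQP : Q ≤ P) (hQ : IsWeakRegular G ε Q)
    (Va Vb : Finset V) (hVa : Va ∈ P.parts) (hVb : Vb ∈ P.parts) (hab : Va ≠ Vb) :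
    ∀ S ⊆ Va, ∀ T ⊆ Vb,
      ε * P.parts.card * Va.card ≤ S.card → ε * P.parts.card * Vb.card ≤ T.card →
      ∑ U ∈ Q.parts.filter (· ⊆ Va), ∑ U' ∈ Q.parts.filter (· ⊆ Vb),
        ((S ∩ U).card : ℝ) * ((T ∩ U').card : ℝ) / (S.card * T.card) *
          |dens G (S ∩ U) (T ∩ U') - dens G U U'| ≤ ε * P.parts.card := by
  intro S hS T hT hSc hTc
  -- The parts of `P` are equal in size, so `k * |V_a| = |V|`.
  have hcard : ∀ W ∈ P.parts, (P.parts.card : ℝ) * W.card = Fintype.card V := by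
    intro W hW
    have h := P.sum_card_parts
    rw [Finset.sum_congr rfl (fun W' hW' => hsize W' hW' W hW), Finset.sum_const, smul_eq_mul,
      Finset.card_univ] at h
    exact_mod_cast h
  have hST : Disjoint S T :=
    Finset.disjoint_of_subset_left hS
      (Finset.disjoint_of_subset_right hT (P.disjoint hVa hVb hab))
  rw [mul_assoc, hcard Va hVa] at hSc
  rw [mul_assoc, hcard Vb hVb] at hTc
  have hreg := hQ S T hST hSc hTc
  have hnn : ∀ U U' : Finset V, 0 ≤ ((S ∩ U).card : ℝ) * ((T ∩ U').card : ℝ) /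
      (S.card * T.card) * |dens G (S ∩ U) (T ∩ U') - dens G U U'| := fun U U' => by positivity
  -- The regularity sum is nonnegative, so a negative `ε` cannot occur.
  have hε : 0 ≤ ε :=
    (Finset.sum_nonneg fun U _ => Finset.sum_nonneg fun U' _ => hnn U U').trans hreg
  have hk : (1 : ℝ) ≤ P.parts.card := by
    exact_mod_cast Finset.card_pos.mpr ⟨Va, hVa⟩
  refine le_trans ?_ (hreg.trans (le_mul_of_one_le_right hε hk))
  refine (Finset.sum_le_sum fun U _ => Finset.sum_le_sum_of_subset_of_nonneg
    (Finset.filter_subset _ _) fun U' _ _ => hnn U U').trans ?_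
  exact Finset.sum_le_sum_of_subset_of_nonneg (Finset.filter_subset _ _)
    fun U _ _ => Finset.sum_nonneg fun U' _ => hnn U U'
end
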